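/- Let X, Y ⊂ ℂ² be algebraic plane curves which are bi-Lipschitz equivalent at infinity. Then X and Y have the same degree, where the degree of an algebraic plane curve is the minimal degree of a nonzero polynomial in two variables vanishing identically on it. -/

import Mathlib

open Set Metric

noncomputable section

/-- An algebraic set in ℂᵏ: the common zero set of a finite family of polynomials. -/
def IsAlgebraicSet {k : ℕ} (X : Set (EuclideanSpace ℂ (Fin k))) : Prop :=
  ∃ S : Finset (MvPolynomial (Fin k) ℂ),
    X = {x | ∀ p ∈ S, MvPolynomial.eval (fun i => x i) p = 0}

/-- An irreducible algebraic curve: an infinite algebraic set all of whose proper algebraic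
subsets are finite. -/
def IsIrreducibleAlgebraicCurve {k : ℕ} (X : Set (EuclideanSpace ℂ (Fin k))) : Prop :=
  IsAlgebraicSet X ∧ X.Infinite ∧ ∀ Y, IsAlgebraicSet Y → Y ⊂ X → Y.Finite

/-- An algebraic curve: a finite union of irreducible algebraic curves. -/
def IsAlgebraicCurve {k : ℕ} (X : Set (EuclideanSpace ℂ (Fin k))) : Prop :=
  ∃ F : Finset (Set (EuclideanSpace ℂ (Fin k))),
    (∀ C ∈ F, IsIrreducibleAlgebraicCurve C) ∧ X = ⋃ C ∈ F, C

/-- `f` maps `X` bijectively onto `Y` and is bi-Lipschitz (outer metric). -/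
def IsBiLipschitzOn {E F : Type*} [NormedAddCommGroup E] [NormedAddCommGroup F]
    (f : E → F) (X : Set E) (Y : Set F) : Prop :=
  Set.BijOn f X Y ∧ ∃ C : ℝ, 1 ≤ C ∧ ∀ x ∈ X, ∀ x' ∈ X,
    C⁻¹ * ‖x - x'‖ ≤ ‖f x - f x'‖ ∧ ‖f x - f x'‖ ≤ C * ‖x - x'‖

/-- `X` and `Y` are bi-Lipschitz equivalent (with respect to the outer Euclidean metric). -/
def BiLipschitzEquiv {E F : Type*} [NormedAddCommGroup E] [NormedAddCommGroup F]
    (X : Set E) (Y : Set F) : Prop :=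
  ∃ f : E → F, IsBiLipschitzOn f X Y

/-- `X` and `Y` are bi-Lipschitz equivalent at infinity. -/
def BiLipschitzEquivAtInfinity {E F : Type*} [NormedAddCommGroup E] [NormedAddCommGroup F]
    (X : Set E) (Y : Set F) : Prop :=
  ∃ (K₁ : Set E) (K₂ : Set F), IsCompact K₁ ∧ IsCompact K₂ ∧
    BiLipschitzEquiv (X \ K₁) (Y \ K₂)

/-- The germs `(X, p)` and `(Y, q)` are bi-Lipschitz equivalent. -/
def GermBiLipschitzEquiv {E F : Type*} [NormedAddCommGroup E] [NormedAddCommGroup F]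
    (X : Set E) (p : E) (Y : Set F) (q : F) : Prop :=
  ∃ (U : Set E) (V : Set F), IsOpen U ∧ IsOpen V ∧ p ∈ U ∧ q ∈ V ∧
    ∃ f : E → F, IsBiLipschitzOn f (X ∩ U) (Y ∩ V) ∧ f p = q

/-- `γ` maps `D` homeomorphically onto `S`. -/
def MapsHomeomorphicallyOnto {E : Type*} [TopologicalSpace E]
    (γ : ℂ → E) (D : Set ℂ) (S : Set E) : Prop :=
  Set.InjOn γ D ∧ γ '' D = S ∧ ContinuousOn γ D ∧
    ∃ σ : E → ℂ, ContinuousOn σ S ∧ ∀ z ∈ D, σ (γ z) = z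

/-- A regular point of a curve `X ⊂ ℂᵏ`: some neighborhood of `p` in `X` is the
homeomorphic image of an injective holomorphic map with nowhere-vanishing derivative. -/
def IsRegularPoint {k : ℕ} (X : Set (EuclideanSpace ℂ (Fin k)))
    (p : EuclideanSpace ℂ (Fin k)) : Prop :=
  ∃ (U : Set (EuclideanSpace ℂ (Fin k))) (D : Set ℂ) (γ : ℂ → EuclideanSpace ℂ (Fin k)),
    IsOpen U ∧ p ∈ U ∧ IsOpen D ∧ DifferentiableOn ℂ γ D ∧ Set.InjOn γ D ∧
    (∀ z ∈ D, deriv γ z ≠ 0) ∧ MapsHomeomorphicallyOnto γ D (X ∩ U)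

/-- The set of singular points of `X`. -/
def SingularSet {k : ℕ} (X : Set (EuclideanSpace ℂ (Fin k))) :
    Set (EuclideanSpace ℂ (Fin k)) :=
  {p ∈ X | ¬ IsRegularPoint X p}

/-- `B` is a (smooth) branch through `q` with tangent vector `v`. -/
def IsBranchAt (B : Set (EuclideanSpace ℂ (Fin 2))) (q v : EuclideanSpace ℂ (Fin 2)) : Prop :=
  ∃ (D : Set ℂ) (γ : ℂ → EuclideanSpace ℂ (Fin 2)) (z₀ : ℂ),
    IsOpen D ∧ z₀ ∈ D ∧ DifferentiableOn ℂ γ D ∧ Set.InjOn γ D ∧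
    (∀ z ∈ D, deriv γ z ≠ 0) ∧ MapsHomeomorphicallyOnto γ D B ∧
    γ z₀ = q ∧ deriv γ z₀ = v

/-- `q` is a node of the plane curve `Y`: near `q`, `Y` is the union of two smooth branches
meeting only at `q` with distinct tangent lines. -/
def IsNode (Y : Set (EuclideanSpace ℂ (Fin 2))) (q : EuclideanSpace ℂ (Fin 2)) : Prop :=
  q ∈ Y ∧ ∃ (U B₁ B₂ : Set (EuclideanSpace ℂ (Fin 2))) (v₁ v₂ : EuclideanSpace ℂ (Fin 2)),
    IsOpen U ∧ q ∈ U ∧ Y ∩ U = B₁ ∪ B₂ ∧ B₁ ∩ B₂ = {q} ∧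
    IsBranchAt B₁ q v₁ ∧ IsBranchAt B₂ q v₂ ∧ ∀ c : ℂ, v₂ ≠ c • v₁

/-- The set of points of `ℂ²` having more than one `π`-preimage in `X`. -/
def MultipleSet {n : ℕ} (π : EuclideanSpace ℂ (Fin n) →ₗ[ℂ] EuclideanSpace ℂ (Fin 2))
    (X : Set (EuclideanSpace ℂ (Fin n))) : Set (EuclideanSpace ℂ (Fin 2)) :=
  {q | ∃ x ∈ X, ∃ y ∈ X, x ≠ y ∧ π x = q ∧ π y = q}

/-- `π` is a generic plane projection for the algebraic curve `X ⊂ ℂⁿ`. -/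
def IsGenericPlaneProjection {n : ℕ}
    (π : EuclideanSpace ℂ (Fin n) →ₗ[ℂ] EuclideanSpace ℂ (Fin 2))
    (X : Set (EuclideanSpace ℂ (Fin n))) : Prop :=
  Function.Surjective π ∧
  (∀ K : Set (EuclideanSpace ℂ (Fin 2)), IsCompact K → IsCompact (X ∩ ⇑π ⁻¹' K)) ∧
  (MultipleSet π X).Finite ∧
  (∀ q ∈ MultipleSet π X, ∃ x y, x ≠ y ∧ {z ∈ X | π z = q} = {x, y} ∧
    IsRegularPoint X x ∧ IsRegularPoint X y) ∧
  (∀ q ∈ MultipleSet π X, IsNode (⇑π '' X) q) ∧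
  (∀ p ∈ X, π p ∉ MultipleSet π X →
    ∃ (U : Set (EuclideanSpace ℂ (Fin n))) (V : Set (EuclideanSpace ℂ (Fin 2))),
      IsOpen U ∧ IsOpen V ∧ p ∈ U ∧ π p ∈ V ∧
      IsBiLipschitzOn (⇑π) (X ∩ U) ((⇑π '' X) ∩ V))

/-- The complex projective plane `ℂP²`. -/
abbrev ProjPlane : Type := Projectivization ℂ (Fin 3 → ℂ)

instance : TopologicalSpace ProjPlane :=
  inferInstanceAs (TopologicalSpace (Quotient (projectivizationSetoid ℂ (Fin 3 → ℂ))))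

/-- The embedding `ℂ² → ℂP²`, `(x, y) ↦ (x : y : 1)`. -/
def toProj (p : EuclideanSpace ℂ (Fin 2)) : ProjPlane :=
  Projectivization.mk ℂ ![p 0, p 1, 1] (fun h => by simpa using congrFun h 2)

/-- The line at infinity in `ℂP²`. -/
def lineAtInfinity : Set ProjPlane := {P | P.rep 2 = 0}

/-- The projective closure of a plane curve `X ⊂ ℂ²`: the topological closure in `ℂP²`. -/
def projClosure (X : Set (EuclideanSpace ℂ (Fin 2))) : Set ProjPlane :=
  closure (toProj '' X)

/-- The germs `(A, p)` and `(B, q)` are (ambient) topologically equivalent. -/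
def GermTopEquiv {T : Type*} [TopologicalSpace T] (A : Set T) (p : T) (B : Set T) (q : T) :
    Prop :=
  ∃ (U V : Set T) (φ ψ : T → T),
    IsOpen U ∧ IsOpen V ∧ p ∈ U ∧ q ∈ V ∧
    ContinuousOn φ U ∧ ContinuousOn ψ V ∧ Set.MapsTo φ U V ∧ Set.MapsTo ψ V U ∧
    (∀ x ∈ U, ψ (φ x) = x) ∧ (∀ y ∈ V, φ (ψ y) = y) ∧
    φ p = q ∧ φ '' (A ∩ U) = B ∩ V

/-- The `i`-th standard affine chart of `ℂP²`. -/
def chart (i : Fin 3) (P : ProjPlane) : EuclideanSpace ℂ (Fin 2) :=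
  (EuclideanSpace.equiv (Fin 2) ℂ).symm fun j => P.rep (i.succAbove j) / P.rep i

/-- A regular point of a curve `C ⊂ ℂP²`: read in a standard affine chart, some neighborhood
of `p` in `C` is the homeomorphic image of an injective holomorphic map with
nowhere-vanishing derivative. -/
def IsRegularPointProj (C : Set ProjPlane) (p : ProjPlane) : Prop :=
  ∃ i : Fin 3, p.rep i ≠ 0 ∧
    ∃ W : Set ProjPlane, IsOpen W ∧ p ∈ W ∧ W ⊆ {P : ProjPlane | P.rep i ≠ 0} ∧
      ∃ (D : Set ℂ) (γ : ℂ → EuclideanSpace ℂ (Fin 2)),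
        IsOpen D ∧ DifferentiableOn ℂ γ D ∧ Set.InjOn γ D ∧ (∀ z ∈ D, deriv γ z ≠ 0) ∧
        MapsHomeomorphicallyOnto γ D (chart i '' (C ∩ W))

/-- The set of singular points of a curve `C ⊂ ℂP²`. -/
def SingularSetProj (C : Set ProjPlane) : Set ProjPlane :=
  {p ∈ C | ¬ IsRegularPointProj C p}

/-- `C` is an irreducible component of the algebraic curve `X`. -/
def IsIrreducibleComponent {k : ℕ} (C X : Set (EuclideanSpace ℂ (Fin k))) : Prop :=
  IsIrreducibleAlgebraicCurve C ∧ C ⊆ X ∧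
    ∀ C', IsIrreducibleAlgebraicCurve C' → C' ⊆ X → C ⊆ C' → C' = C

/-- The degree of an algebraic plane curve: the minimal degree of a nonzero polynomial
vanishing identically on it. -/
def curveDegree (X : Set (EuclideanSpace ℂ (Fin 2))) : ℕ :=
  sInf {d | ∃ P : MvPolynomial (Fin 2) ℂ, P ≠ 0 ∧ P.totalDegree = d ∧
    ∀ x ∈ X, MvPolynomial.eval (fun i => x i) P = 0}

section
structure Good (Z : Set (ℂ × ℂ)) (T : Finset ℂ) (d : ℕ) (η R : ℝ) : Prop where
  fin : ∀ u, R < ‖u‖ → {v | (u, v) ∈ Z}.Finite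
  card : ∀ u, R < ‖u‖ → {v | (u, v) ∈ Z}.ncard = d
  slope : ∀ u v, (u, v) ∈ Z → R < ‖u‖ → ∃ t ∈ T, ‖v - t * u‖ ≤ η * ‖u‖
  lift : ∀ a r, (∀ u ∈ ball a r, R < ‖u‖) → ∀ z ∈ Z, z.1 ∈ ball a r →
    ∃ σ : ℂ → ℂ, ContinuousOn σ (ball a r) ∧ σ z.1 = z.2 ∧ (∀ u ∈ ball a r, (u, σ u) ∈ Z) ∧
      ∀ (S : Set ℂ) (h : ℂ → ℂ × ℂ), IsPreconnected S → ContinuousOn h S →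
        (∀ s ∈ S, h s ∈ Z ∧ (h s).1 ∈ ball a r) → (∃ s ∈ S, (h s).2 = σ (h s).1) →
        ∀ s ∈ S, (h s).2 = σ (h s).1

structure BL (Z Z' : Set (ℂ × ℂ)) (f g : ℂ × ℂ → ℂ × ℂ) (M R : ℝ) : Prop where
  mem : ∀ x ∈ Z, R < ‖x.1‖ → f x ∈ Z'
  inv : ∀ x ∈ Z, R < ‖x.1‖ → g (f x) = x
  lo : ∀ x ∈ Z, R < ‖x.1‖ → ‖x.1‖ ≤ M * ‖(f x).1‖
  up : ∀ x ∈ Z, R < ‖x.1‖ → ‖(f x).1‖ ≤ M * ‖x.1‖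
  lip : ∀ x ∈ Z, ∀ x' ∈ Z, R < ‖x.1‖ → R < ‖x'.1‖ → ‖f x - f x'‖ ≤ M * ‖x - x'‖

structure SlopeSep (T : Finset ℂ) (θ L : ℝ) : Prop where
  sep : ∀ t ∈ T, ∀ t' ∈ T, t ≠ t' → θ ≤ ‖t - t'‖
  bd : ∀ t ∈ T, ‖t‖ ≤ L

def fib (Z : Set (ℂ × ℂ)) (η : ℝ) (t a : ℂ) : Set ℂ := {v | (a, v) ∈ Z ∧ ‖v - t * a‖ ≤ η * ‖a‖}

lemma slope_eq {T : Finset ℂ} {θ L η κ : ℝ} (hT : SlopeSep T θ L) {t t' u v u' v' : ℂ}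
    (ht : t ∈ T) (ht' : t' ∈ T) (h : ‖v - t * u‖ ≤ η * ‖u‖) (h' : ‖v' - t' * u'‖ ≤ η * ‖u'‖)
    (hu : ‖u - u'‖ ≤ κ * ‖u‖) (hv : ‖v - v'‖ ≤ κ * ‖u‖) (hη : 0 ≤ η) (hκ : κ ≤ 1)
    (hs : 3 * η + κ * (1 + L) < θ) (hpos : 0 < ‖u‖) : t = t' := by
  by_contra hne
  have h1 := hT.sep t ht t' ht' hne
  have h2 := hT.bd t' ht'
  have h3 : (t - t') * u = -(v - t * u) + (v - v') + (v' - t' * u') + t' * (u' - u) := by ring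
  have h4 : ‖(t - t') * u‖ ≤ ‖v - t * u‖ + ‖v - v'‖ + ‖v' - t' * u'‖ + ‖t'‖ * ‖u - u'‖ := by
    rw [h3]
    refine (norm_add_le _ _).trans ?_
    rw [norm_mul, norm_sub_rev u' u]
    gcongr
    refine (norm_add_le _ _).trans ?_
    gcongr
    refine (norm_add_le _ _).trans ?_
    rw [norm_neg]
  rw [norm_mul] at h4
  have h5 : ‖u'‖ ≤ 2 * ‖u‖ := by
    have := norm_sub_norm_le u' u
    rw [norm_sub_rev] at this
    nlinarith
  have h6 : ‖t'‖ * ‖u - u'‖ ≤ L * (κ * ‖u‖) := by gcongr; exact (norm_nonneg _).trans h2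
  have h7 : η * ‖u'‖ ≤ η * (2 * ‖u‖) := by gcongr
  have h8 : θ * ‖u‖ ≤ ‖t - t'‖ * ‖u‖ := by gcongr
  nlinarith

lemma near_of_slope {t u v u' v' : ℂ} {η L : ℝ} (hL : ‖t‖ ≤ L)
    (h : ‖v - t * u‖ ≤ η * ‖u‖) (h' : ‖v' - t * u'‖ ≤ η * ‖u'‖) :
    ‖v - v'‖ ≤ η * ‖u‖ + η * ‖u'‖ + L * ‖u - u'‖ := by
  have h3 : v - v' = (v - t * u) - (v' - t * u') + t * (u - u') := by ring
  rw [h3]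
  refine (norm_add_le _ _).trans ?_
  rw [norm_mul]
  gcongr
  refine (norm_sub_le _ _).trans ?_
  gcongr

lemma preconn_compl (R : ℝ) (hR : 0 ≤ R) : IsPreconnected {b : ℂ | R < ‖b‖} := by
  have : {b : ℂ | R < ‖b‖} = (fun p : ℝ × ℝ => (p.1 : ℂ) * Complex.exp (p.2 * Complex.I)) ''
      (Ioi R ×ˢ univ) := by
    ext b
    constructor
    · intro hb
      exact ⟨(‖b‖, b.arg), ⟨hb, trivial⟩, Complex.norm_mul_exp_arg_mul_I b⟩
    · rintro ⟨⟨r, s⟩, ⟨hr, -⟩, rfl⟩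
      have hr' : R < r := hr
      simp only [mem_ofPred_eq, norm_mul, Complex.norm_exp_ofReal_mul_I, mul_one,
        Complex.norm_real, Real.norm_eq_abs]
      exact lt_of_lt_of_le hr' (le_abs_self r)
  rw [this]
  refine (isPreconnected_Ioi.prod isPreconnected_univ).image _ ?_
  fun_prop

lemma const_of_step {α : Type*} (φ : ℂ → α) (R κ : ℝ) (hR : 0 ≤ R) (hκ : 0 < κ)
    (h : ∀ b b', R < ‖b‖ → R < ‖b'‖ → ‖b - b'‖ ≤ κ * ‖b‖ → φ b = φ b') :
    ∀ b b', R < ‖b‖ → R < ‖b'‖ → φ b = φ b' := by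
  intro b b' hb hb'
  refine (preconn_compl R hR).induction₂ (fun x y => φ x = φ y) ?_ ?_ ?_ hb hb'
  · intro x hx
    have hx0 : 0 < ‖x‖ := lt_of_le_of_lt hR hx
    have : ball x (κ * ‖x‖) ∈ nhds x := ball_mem_nhds _ (by positivity)
    filter_upwards [self_mem_nhdsWithin, mem_nhdsWithin_of_mem_nhds this] with y hy hy'
    apply h x y hx hy
    rw [mem_ball, dist_comm, dist_eq_norm] at hy'
    exact hy'.le
  · intro x y z _ _ _ h1 h2; exact h1.trans h2
  · intro x y _ _ h1; exact h1.symm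

lemma sec_slope {Z : Set (ℂ × ℂ)} {T : Finset ℂ} {d : ℕ} {η R θ L : ℝ} (G : Good Z T d η R)
    (hT : SlopeSep T θ L) (hη : 0 ≤ η) (hs : 3 * η < θ) (hR : 0 ≤ R) (hL : 0 ≤ L)
    {a : ℂ} {r : ℝ} (hb : ∀ u ∈ ball a r, R < ‖u‖) {σ : ℂ → ℂ} (hσ : ContinuousOn σ (ball a r))
    (hZ : ∀ u ∈ ball a r, (u, σ u) ∈ Z) {t u₀ u : ℂ} (ht : t ∈ T) (hu₀ : u₀ ∈ ball a r)
    (hu : u ∈ ball a r) (h : ‖σ u₀ - t * u₀‖ ≤ η * ‖u₀‖) : ‖σ u - t * u‖ ≤ η * ‖u‖ := by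
  obtain ⟨κ, hκ0, hκ1, hκ⟩ : ∃ κ : ℝ, 0 < κ ∧ κ ≤ 1 ∧ 3 * η + κ * (1 + L) < θ := by
    refine ⟨min 1 ((θ - 3 * η) / (2 * (1 + L))), lt_min one_pos (div_pos (by linarith) (by linarith)),
      min_le_left _ _, ?_⟩
    have : min 1 ((θ - 3 * η) / (2 * (1 + L))) * (1 + L) ≤ ((θ - 3 * η) / (2 * (1 + L))) * (1 + L) := by
      gcongr; exact min_le_right _ _
    have h2 : ((θ - 3 * η) / (2 * (1 + L))) * (1 + L) = (θ - 3 * η) / 2 := by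
      field_simp
    linarith
  have key := (convex_ball a r).isPreconnected.induction₂
    (fun x y => ∀ t ∈ T, ∀ t' ∈ T, ‖σ x - t * x‖ ≤ η * ‖x‖ → ‖σ y - t' * y‖ ≤ η * ‖y‖ → t = t')
    ?_ ?_ ?_ hu₀ hu
  · obtain ⟨t', ht', h'⟩ := G.slope u (σ u) (hZ u hu) (hb u hu)
    have := key t ht t' ht' h h'
    rwa [this]
  · intro x hx
    have hx0 : 0 < ‖x‖ := lt_of_le_of_lt hR (hb x hx)
    have e1 : ball x (κ * ‖x‖) ∈ nhds x := ball_mem_nhds _ (by positivity)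
    have e2 := (hσ x hx) (ball_mem_nhds (σ x) (show 0 < κ * ‖x‖ by positivity))
    filter_upwards [mem_nhdsWithin_of_mem_nhds e1, e2] with y hy hy' t1 ht1 t2 ht2 h1 h2
    rw [mem_ball, dist_comm, dist_eq_norm] at hy
    have hy'' : ‖σ x - σ y‖ < κ * ‖x‖ := by
      have : σ y ∈ ball (σ x) (κ * ‖x‖) := hy'
      rwa [mem_ball, dist_comm, dist_eq_norm] at this
    exact slope_eq hT ht1 ht2 h1 h2 hy.le hy''.le hη hκ1 hκ hx0
  · intro x y z hx hy hz h1 h2 t1 ht1 t2 ht2 a1 a2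
    obtain ⟨t', ht', h'⟩ := G.slope y (σ y) (hZ y hy) (hb y hy)
    exact (h1 t1 ht1 t' ht' a1 h').trans (h2 t' ht' t2 ht2 h' a2)
  · intro x y hx hy h1 t1 ht1 t2 ht2 a1 a2
    exact (h1 t2 ht2 t1 ht1 a2 a1).symm

lemma half_ball {a u : ℂ} {R r : ℝ} (h : 2 * R < ‖a‖) (hr : r ≤ 1 / 2 * ‖a‖) (hu : u ∈ ball a r) :
    R < ‖u‖ := by
  rw [mem_ball, dist_eq_norm] at hu
  have := norm_sub_norm_le a u
  rw [norm_sub_rev] at this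
  linarith

/-- sections through two points agreeing somewhere agree. -/
lemma inj_of_fibers {Z Z' : Set (ℂ × ℂ)} {η : ℝ} {t a t' b : ℂ} (hfin : (fib Z' η t' b).Finite)
    (F : ℂ → ℂ) (hm : ∀ v ∈ fib Z η t a, F v ∈ fib Z' η t' b) (hi : InjOn F (fib Z η t a)) :
    (fib Z η t a).ncard ≤ (fib Z' η t' b).ncard :=
  Set.ncard_le_ncard_of_injOn F hm hi hfin

lemma Good.fib_fin {Z : Set (ℂ × ℂ)} {T : Finset ℂ} {d : ℕ} {η R : ℝ} (G : Good Z T d η R)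
    (t : ℂ) {a : ℂ} (ha : R < ‖a‖) : (fib Z η t a).Finite :=
  (G.fin a ha).subset fun _ hv => hv.1

lemma card_le {Z : Set (ℂ × ℂ)} {T : Finset ℂ} {d : ℕ} {η R θ L : ℝ} (G : Good Z T d η R)
    (hT : SlopeSep T θ L) (hη : 0 ≤ η) (hs : 3 * η < θ) (hR : 0 ≤ R) (hL : 0 ≤ L)
    {t b b' : ℂ} (ht : t ∈ T) (hb : 2 * R < ‖b‖) (hbb : ‖b' - b‖ < 1 / 2 * ‖b‖) :
    (fib Z η t b).ncard ≤ (fib Z η t b').ncard := by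
  have hball : ∀ u ∈ ball b (1 / 2 * ‖b‖), R < ‖u‖ := fun u hu => half_ball hb le_rfl hu
  have hbR : R < ‖b‖ := by linarith
  have hb0 : 0 < ‖b‖ := by linarith
  have hbm : b ∈ ball b (1 / 2 * ‖b‖) := mem_ball_self (by positivity)
  have hbm' : b' ∈ ball b (1 / 2 * ‖b‖) := by rwa [mem_ball, dist_eq_norm]
  have H : ∀ v, ∃ σ : ℂ → ℂ, v ∈ fib Z η t b → ContinuousOn σ (ball b (1 / 2 * ‖b‖)) ∧ σ b = v ∧
      (∀ u ∈ ball b (1 / 2 * ‖b‖), (u, σ u) ∈ Z) ∧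
      ∀ (S : Set ℂ) (h : ℂ → ℂ × ℂ), IsPreconnected S → ContinuousOn h S →
        (∀ s ∈ S, h s ∈ Z ∧ (h s).1 ∈ ball b (1 / 2 * ‖b‖)) → (∃ s ∈ S, (h s).2 = σ (h s).1) →
        ∀ s ∈ S, (h s).2 = σ (h s).1 := by
    intro v
    by_cases hv : v ∈ fib Z η t b
    · obtain ⟨σ, h⟩ := G.lift b (1 / 2 * ‖b‖) hball (b, v) hv.1 hbm
      exact ⟨σ, fun _ => h⟩
    · exact ⟨0, fun h => absurd h hv⟩
  choose σ hσ using H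
  refine inj_of_fibers (G.fib_fin t (hball _ hbm')) (fun v => σ v b') ?_ ?_
  · intro v hv
    obtain ⟨h1, h2, h3, h4⟩ := hσ v hv
    refine ⟨h3 _ hbm', sec_slope G hT hη hs hR hL hball h1 h3 ht hbm hbm' ?_⟩
    rw [h2]; exact hv.2
  · intro v hv v' hv' heq
    obtain ⟨h1, h2, h3, h4⟩ := hσ v hv
    obtain ⟨h1', h2', h3', h4'⟩ := hσ v' hv'
    have := h4 (ball b (1 / 2 * ‖b‖)) (fun u => (u, σ v' u)) (convex_ball _ _).isPreconnected
      (continuousOn_id.prodMk h1') (fun s hs => ⟨h3' s hs, hs⟩) ⟨b', hbm', heq.symm⟩ b hbm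
    simp only [h2, h2'] at this
    exact this.symm

lemma card_const {Z : Set (ℂ × ℂ)} {T : Finset ℂ} {d : ℕ} {η R θ L : ℝ} (G : Good Z T d η R)
    (hT : SlopeSep T θ L) (hη : 0 ≤ η) (hs : 3 * η < θ) (hR : 0 ≤ R) (hL : 0 ≤ L)
    {t b b' : ℂ} (ht : t ∈ T) (hb : 2 * R < ‖b‖) (hb' : 2 * R < ‖b'‖) :
    (fib Z η t b).ncard = (fib Z η t b').ncard := by
  refine const_of_step (fun b => (fib Z η t b).ncard) (2 * R) (1 / 5) (by linarith) (by norm_num)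
    ?_ b b' hb hb'
  intro b b' hb hb' h
  have hb0 : 0 < ‖b‖ := by linarith
  have : ‖b‖ ≤ ‖b'‖ + ‖b - b'‖ := by
    have := norm_sub_norm_le b b'; linarith
  refine le_antisymm (card_le G hT hη hs hR hL ht hb ?_) (card_le G hT hη hs hR hL ht hb' ?_)
  · rw [norm_sub_rev]; linarith
  · linarith
end

section
lemma lo_gt {R M p q : ℝ} (hM : 0 < M) (h : M * R < p) (h' : p ≤ M * q) : R < q := by
  by_contra hc
  push Not at hc
  nlinarith

section
variable {Z Z' : Set (ℂ × ℂ)} {T T' : Finset ℂ} {d d' : ℕ} {η R θ L M : ℝ} {f g : ℂ × ℂ → ℂ × ℂ}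

lemma chain_step (hT : SlopeSep T θ L) (hT' : SlopeSep T' θ L)
    (hg : BL Z' Z g f M R) (hη : 0 < η) (hη1 : η ≤ 1) (hL : 0 ≤ L) (hM : 1 ≤ M) (hR : 0 < R)
    (hK : 3 * η + M ^ 2 * (4 + 2 * L) * η * (1 + L) < θ) (hK1 : M ^ 2 * (4 + 2 * L) * η ≤ 1)
    {s t t' : ℂ} (hs : s ∈ T') (ht : t ∈ T) (ht' : t' ∈ T) {y y' : ℂ × ℂ} (hy : y ∈ Z') (hy' : y' ∈ Z')
    (hyR : M * R < ‖y.1‖) (hyR' : M * R < ‖y'.1‖) (hb : ‖y.1 - y'.1‖ ≤ η * ‖y.1‖)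
    (h1 : ‖y.2 - s * y.1‖ ≤ η * ‖y.1‖) (h2 : ‖y'.2 - s * y'.1‖ ≤ η * ‖y'.1‖)
    (h3 : ‖(g y).2 - t * (g y).1‖ ≤ η * ‖(g y).1‖)
    (h4 : ‖(g y').2 - t' * (g y').1‖ ≤ η * ‖(g y').1‖) : t = t' := by
  have hRM : R ≤ M * R := by nlinarith
  have hy1 : R < ‖y.1‖ := by linarith
  have hy1' : R < ‖y'.1‖ := by linarith
  have hn := near_of_slope (hT'.bd s hs) h1 h2
  have h5 : ‖y'.1‖ ≤ 2 * ‖y.1‖ := by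
    have := norm_sub_norm_le y'.1 y.1
    rw [norm_sub_rev] at this
    nlinarith
  have h6 : η * ‖y'.1‖ ≤ η * (2 * ‖y.1‖) := by gcongr
  have h7 : L * ‖y.1 - y'.1‖ ≤ L * (η * ‖y.1‖) := by gcongr
  have hd : ‖y - y'‖ ≤ (4 + 2 * L) * η * ‖y.1‖ := by
    rw [Prod.norm_def]
    have : 0 ≤ L * (η * ‖y.1‖) := by positivity
    have : 0 ≤ η * ‖y.1‖ := by positivity
    refine max_le ?_ ?_
    · rw [Prod.fst_sub]; nlinarith
    · rw [Prod.snd_sub]; nlinarith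
  have hl := hg.lip y hy y' hy' hy1 hy1'
  have hlo := hg.lo y hy hy1
  have hup := hg.up y hy hy1
  have hd2 : ‖g y - g y'‖ ≤ M ^ 2 * (4 + 2 * L) * η * ‖(g y).1‖ := by
    calc ‖g y - g y'‖ ≤ M * ((4 + 2 * L) * η * ‖y.1‖) := hl.trans (by gcongr)
      _ ≤ M * ((4 + 2 * L) * η * (M * ‖(g y).1‖)) := by gcongr
      _ = _ := by ring
  have hpos : R < ‖(g y).1‖ := lo_gt (by linarith) hyR hlo
  refine slope_eq hT ht ht' h3 h4 ?_ ?_ hη.le hK1 hK (by linarith)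
  · exact (norm_fst_le (g y - g y')).trans hd2
  · exact (norm_snd_le (g y - g y')).trans hd2

lemma chain (G : Good Z T d η R) (hT : SlopeSep T θ L) (hT' : SlopeSep T' θ L)
    (hf : BL Z Z' f g M R)
    (hg : BL Z' Z g f M R) (hη : 0 < η) (hη1 : η ≤ 1) (hL : 0 ≤ L) (hM : 1 ≤ M) (hR : 0 < R)
    (hK : 3 * η + M ^ 2 * (4 + 2 * L) * η * (1 + L) < θ) (hK1 : M ^ 2 * (4 + 2 * L) * η ≤ 1)
    {s t t' : ℂ} (hs : s ∈ T') (ht : t ∈ T) (ht' : t' ∈ T)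
    (hne : ∀ b, M * R < ‖b‖ → (fib Z' η s b).Nonempty)
    {x x' : ℂ × ℂ} (hx : x ∈ Z) (hx' : x' ∈ Z)
    (hxR : M * (M * R) < ‖x.1‖) (hxR' : M * (M * R) < ‖x'.1‖)
    (h1 : ‖(f x).2 - s * (f x).1‖ ≤ η * ‖(f x).1‖)
    (h2 : ‖(f x').2 - s * (f x').1‖ ≤ η * ‖(f x').1‖)
    (h3 : ‖x.2 - t * x.1‖ ≤ η * ‖x.1‖) (h4 : ‖x'.2 - t' * x'.1‖ ≤ η * ‖x'.1‖) : t = t' := by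
  have hM0 : 0 < M := by linarith
  have hRM : R ≤ M * R := by nlinarith
  have hRMM : M * R ≤ M * (M * R) := by gcongr
  have H : ∀ b, ∃ p : ℂ × ℂ, M * R < ‖b‖ → (b, p.1) ∈ Z' ∧ ‖p.1 - s * b‖ ≤ η * ‖b‖ ∧ p.2 ∈ T ∧
      ‖(g (b, p.1)).2 - p.2 * (g (b, p.1)).1‖ ≤ η * ‖(g (b, p.1)).1‖ := by
    intro b
    by_cases hb : M * R < ‖b‖
    · obtain ⟨w, hw⟩ := hne b hb
      have hbR : R < ‖(b, w).1‖ := lt_of_le_of_lt hRM hb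
      obtain ⟨t, ht, h⟩ := G.slope (g (b, w)).1 (g (b, w)).2 (hg.mem _ hw.1 hbR)
        (lo_gt hM0 hb (hg.lo _ hw.1 hbR))
      exact ⟨(w, t), fun _ => ⟨hw.1, hw.2, ht, h⟩⟩
    · exact ⟨0, fun h => absurd h hb⟩
  choose p hp using H
  have hc := const_of_step (fun b => (p b).2) (M * R) η (by positivity) hη (by
    intro b b' hb hb' hbb
    obtain ⟨a1, a2, a3, a4⟩ := hp b hb
    obtain ⟨a1', a2', a3', a4'⟩ := hp b' hb'
    exact chain_step hT hT' hg hη hη1 hL hM hR hK hK1 hs a3 a3' a1 a1' hb hb' hbb a2 a2' a4 a4')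
  have end_ : ∀ t ∈ T, ∀ x ∈ Z, M * (M * R) < ‖x.1‖ → ‖(f x).2 - s * (f x).1‖ ≤ η * ‖(f x).1‖ →
      ‖x.2 - t * x.1‖ ≤ η * ‖x.1‖ → M * R < ‖(f x).1‖ ∧ t = (p (f x).1).2 := by
    intro t ht x hx hxR h1 h3
    have hx1 : R < ‖x.1‖ := by linarith
    have hfR := lo_gt hM0 hxR (hf.lo x hx hx1)
    refine ⟨hfR, ?_⟩
    obtain ⟨a1, a2, a3, a4⟩ := hp _ hfR
    have hi := hf.inv x hx hx1
    refine chain_step (y := f x) (y' := ((f x).1, (p (f x).1).1)) hT hT' hg hη hη1 hL hM hR hK hK1 hs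
      ht a3 (hf.mem x hx hx1) a1 hfR hfR ?_ h1 a2 ?_ a4
    · simp only [sub_self, norm_zero]; positivity
    · rwa [hi]
  obtain ⟨r1, e1⟩ := end_ t ht x hx hxR h1 h3
  obtain ⟨r2, e2⟩ := end_ t' ht' x' hx' hxR' h2 h4
  rw [e1, e2]
  exact hc _ _ r1 r2

lemma fib_le (G : Good Z T d η R) (G' : Good Z' T' d' η R) (hT : SlopeSep T θ L)
    (hT' : SlopeSep T' θ L)
    (hf : BL Z Z' f g M R)
    (hg : BL Z' Z g f M R) (hη : 0 < η) (hL : 0 ≤ L) (hM : 1 ≤ M) (hR : 0 < R)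
    (hκ1 : 2 * η * M ^ 2 ≤ 1) (hκ : 3 * η + 2 * η * M ^ 2 * (1 + L) < θ)
    (hρ : 3 * η * M ^ 2 ≤ 1 / 2)
    (hlam : M ^ 2 * (4 * η + (1 + L) * (6 * η * M ^ 2)) < 1 / 2)
    {t : ℂ} (ht : t ∈ T) {a : ℂ} (ha : M * (M * (2 * R)) < ‖a‖) (hne : (fib Z η t a).Nonempty) :
    ∃ s ∈ T', ∃ v b, 2 * R < ‖b‖ ∧ v ∈ fib Z η t a ∧ 
      ‖(f (a, v)).2 - s * (f (a, v)).1‖ ≤ η * ‖(f (a, v)).1‖ ∧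
      (fib Z η t a).ncard ≤ (fib Z' η s b).ncard := by
  have hM0 : 0 < M := by linarith
  have h2R : 2 * R ≤ M * (2 * R) := by nlinarith
  have h2RM : M * (2 * R) ≤ M * (M * (2 * R)) := by gcongr
  have haR : R < ‖a‖ := by linarith
  have ha0 : 0 < ‖a‖ := by linarith
  obtain ⟨v₁, hv₁⟩ := hne
  set b := (f (a, v₁)).1 with hbdef
  have hloa : ∀ v ∈ fib Z η t a, ‖a‖ ≤ M * ‖(f (a, v)).1‖ := fun v hv => hf.lo (a, v) hv.1 haR
  have hupa : ∀ v ∈ fib Z η t a, ‖(f (a, v)).1‖ ≤ M * ‖a‖ := fun v hv => hf.up (a, v) hv.1 haR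
  have hbMR : M * (2 * R) < ‖b‖ := lo_gt hM0 ha (hloa v₁ hv₁)
  have hb2R : 2 * R < ‖b‖ := by linarith
  have hb0 : 0 < ‖b‖ := by linarith
  have hbR : R < ‖b‖ := by linarith
  obtain ⟨s, hs, hsl⟩ := G'.slope b (f (a, v₁)).2 (hf.mem (a, v₁) hv₁.1 haR) hbR
  refine ⟨s, hs, v₁, b, hb2R, hv₁, hsl, ?_⟩
  -- closeness
  have hclose : ∀ v ∈ fib Z η t a, ‖f (a, v₁) - f (a, v)‖ ≤ 2 * η * M ^ 2 * ‖b‖ := by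
    intro v hv
    have h1 := hf.lip (a, v₁) hv₁.1 (a, v) hv.1 haR haR
    have h2 := near_of_slope (hT.bd t ht) hv₁.2 hv.2
    rw [sub_self, norm_zero, mul_zero] at h2
    have h3 : ‖(a, v₁) - (a, v)‖ ≤ 2 * η * ‖a‖ := by
      rw [Prod.norm_def]
      refine max_le ?_ ?_
      · simp; positivity
      · simp; linarith
    calc _ ≤ M * (2 * η * ‖a‖) := h1.trans (by gcongr)
      _ ≤ M * (2 * η * (M * ‖b‖)) := by gcongr; exact hloa v₁ hv₁
      _ = _ := by ring
  set r := 3 * η * M ^ 2 * ‖b‖ with hr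
  have hrhalf : r ≤ 1 / 2 * ‖b‖ := by rw [hr]; gcongr
  have hr0 : 0 < r := by positivity
  have hball : ∀ u ∈ ball b r, R < ‖u‖ := fun u hu => half_ball hb2R hrhalf hu
  have hyball : ∀ v ∈ fib Z η t a, (f (a, v)).1 ∈ ball b r := by
    intro v hv
    rw [mem_ball, dist_comm, dist_eq_norm]
    have := (norm_fst_le (f (a, v₁) - f (a, v))).trans (hclose v hv)
    refine lt_of_le_of_lt this ?_
    rw [hr]
    have : 0 < η * M ^ 2 * ‖b‖ := by positivity
    nlinarith
  have hyslope : ∀ v ∈ fib Z η t a, ‖(f (a, v)).2 - s * (f (a, v)).1‖ ≤ η * ‖(f (a, v)).1‖ := by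
    intro v hv
    obtain ⟨s', hs', h⟩ := G'.slope (f (a, v)).1 (f (a, v)).2 (hf.mem (a, v) hv.1 haR)
      (hball _ (hyball v hv))
    have : s = s' := slope_eq hT' hs hs' hsl h
      ((norm_fst_le (f (a, v₁) - f (a, v))).trans (hclose v hv))
      ((norm_snd_le (f (a, v₁) - f (a, v))).trans (hclose v hv)) hη.le hκ1 hκ hb0
    rwa [this]
  have hbm : b ∈ ball b r := mem_ball_self hr0
  have H : ∀ v, ∃ σ : ℂ → ℂ, v ∈ fib Z η t a → ContinuousOn σ (ball b r) ∧
      σ (f (a, v)).1 = (f (a, v)).2 ∧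
      (∀ u ∈ ball b r, (u, σ u) ∈ Z') ∧
      ∀ (S : Set ℂ) (h : ℂ → ℂ × ℂ), IsPreconnected S → ContinuousOn h S →
        (∀ s ∈ S, h s ∈ Z' ∧ (h s).1 ∈ ball b r) → (∃ s ∈ S, (h s).2 = σ (h s).1) →
        ∀ s ∈ S, (h s).2 = σ (h s).1 := by
    intro v
    by_cases hv : v ∈ fib Z η t a
    · obtain ⟨σ, h⟩ := G'.lift b r hball (f (a, v)) (hf.mem (a, v) hv.1 haR) (hyball v hv)
      exact ⟨σ, fun _ => h⟩
    · exact ⟨0, fun h => absurd h hv⟩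
  choose σ hσ using H
  have h3η : 3 * η < θ := by
    have : 0 ≤ 2 * η * M ^ 2 * (1 + L) := by positivity
    linarith
  have hσs : ∀ v ∈ fib Z η t a, ∀ u ∈ ball b r, ‖σ v u - s * u‖ ≤ η * ‖u‖ := by
    intro v hv u hu
    obtain ⟨h1, h2, h3, h4⟩ := hσ v hv
    refine sec_slope G' hT' hη.le h3η hR.le hL hball h1 h3 hs (hyball v hv) hu ?_
    rw [h2]; exact hyslope v hv
  refine inj_of_fibers (G'.fib_fin s hbR) (fun v => σ v b) ?_ ?_
  · intro v hv
    exact ⟨(hσ v hv).2.2.1 b hbm, hσs v hv b hbm⟩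
  · intro v hv v' hv' heq
    obtain ⟨h1, h2, h3, h4⟩ := hσ v hv
    obtain ⟨h1', h2', h3', h4'⟩ := hσ v' hv'
    have hy' := h4 (ball b r) (fun u => (u, σ v' u)) (convex_ball _ _).isPreconnected
      (continuousOn_id.prodMk h1') (fun s hs => ⟨h3' s hs, hs⟩) ⟨b, hbm, heq.symm⟩
      (f (a, v')).1 (hyball v' hv')
    simp only [h2'] at hy'
    -- the curve in Z
    have hnb : ∀ u ∈ ball b r, ‖u‖ ≤ 2 * ‖b‖ := by
      intro u hu
      rw [mem_ball, dist_eq_norm] at hu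
      have := norm_sub_norm_le u b
      linarith
    have hdiam : ∀ u ∈ ball b r, ∀ u' ∈ ball b r, ‖((u, σ v u) : ℂ × ℂ) - (u', σ v u')‖ ≤
        (4 * η + (1 + L) * (6 * η * M ^ 2)) * ‖b‖ := by
      intro u hu u' hu'
      have e1 := near_of_slope (hT'.bd s hs) (hσs v hv u hu) (hσs v hv u' hu')
      have e2 : ‖u - u'‖ ≤ 6 * η * M ^ 2 * ‖b‖ := by
        rw [mem_ball] at hu hu'
        have := dist_triangle_right u u' b
        rw [dist_eq_norm] at this
        linarith
      have e3 : η * ‖u‖ ≤ η * (2 * ‖b‖) := by gcongr; exact hnb u hu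
      have e4 : η * ‖u'‖ ≤ η * (2 * ‖b‖) := by gcongr; exact hnb u' hu'
      have e5 : L * ‖u - u'‖ ≤ L * (6 * η * M ^ 2 * ‖b‖) := by gcongr
      have e6 : 0 ≤ L * (6 * η * M ^ 2 * ‖b‖) := by positivity
      have e7 : 0 ≤ 6 * η * M ^ 2 * ‖b‖ := by positivity
      have e8 : 0 ≤ η * ‖b‖ := by positivity
      rw [Prod.norm_def]
      refine max_le ?_ ?_
      · rw [Prod.fst_sub]; simp only; nlinarith
      · rw [Prod.snd_sub]; simp only; nlinarith
    have hyv : ((f (a, v)).1, σ v (f (a, v)).1) = f (a, v) := by rw [h2]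
    have hgu : ∀ u ∈ ball b r, (g (u, σ v u)).1 ∈ ball a (1 / 2 * ‖a‖) := by
      intro u hu
      have e1 := hg.lip (u, σ v u) (h3 u hu) (f (a, v)) (hf.mem (a, v) hv.1 haR) (hball u hu)
        (hball _ (hyball v hv))
      rw [hf.inv (a, v) hv.1 haR] at e1
      have e2 := hdiam u hu _ (hyball v hv)
      rw [hyv] at e2
      have e3 := (norm_fst_le (g (u, σ v u) - (a, v))).trans e1
      rw [mem_ball, dist_eq_norm]
      calc _ ≤ M * ((4 * η + (1 + L) * (6 * η * M ^ 2)) * ‖b‖) := e3.trans (by gcongr)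
        _ ≤ M * ((4 * η + (1 + L) * (6 * η * M ^ 2)) * (M * ‖a‖)) := by
          gcongr; exact hupa v₁ hv₁
        _ = M ^ 2 * (4 * η + (1 + L) * (6 * η * M ^ 2)) * ‖a‖ := by ring
        _ < 1 / 2 * ‖a‖ := by gcongr
    obtain ⟨τ, k1, k2, k3, k4⟩ := G.lift a (1 / 2 * ‖a‖)
      (fun u hu => half_ball (by linarith) le_rfl hu) (a, v) hv.1 (mem_ball_self (by positivity))
    have hgc : ContinuousOn (fun u => g (u, σ v u)) (ball b r) := by
      have hLip : LipschitzOnWith (Real.toNNReal M) g {y | y ∈ Z' ∧ R < ‖y.1‖} := by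
        refine LipschitzOnWith.of_dist_le_mul ?_
        intro y hy y' hy'
        rw [dist_eq_norm, dist_eq_norm, Real.coe_toNNReal _ hM0.le]
        exact hg.lip y hy.1 y' hy'.1 hy.2 hy'.2
      exact hLip.continuousOn.comp (continuousOn_id.prodMk h1) (fun u hu => ⟨h3 u hu, hball u hu⟩)
    have fin1 := k4 (ball b r) (fun u => g (u, σ v u)) (convex_ball _ _).isPreconnected hgc
      (fun u hu => ⟨hg.mem _ (h3 u hu) (hball u hu), hgu u hu⟩)
      ⟨(f (a, v)).1, hyball v hv, by
        simp only [hyv, hf.inv (a, v) hv.1 haR]; exact k2.symm⟩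
      (f (a, v')).1 (hyball v' hv')
    have hyv' : ((f (a, v')).1, σ v (f (a, v')).1) = f (a, v') := by rw [← hy']
    simp only [hyv', hf.inv (a, v') hv'.1 haR] at fin1
    rw [fin1]; exact k2.symm

lemma card_sum (G : Good Z T d η R) (hT : SlopeSep T θ L) (hη : 0 < η) (h3η : 3 * η < θ)
    {a : ℂ} (ha : R < ‖a‖) (hR : 0 < R) (hL : 0 ≤ L) : ∑ t ∈ T, (fib Z η t a).ncard = d := by
  rw [← G.card a ha]
  have : {v | (a, v) ∈ Z} = ⋃ t ∈ T, fib Z η t a := by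
    ext v
    simp only [mem_iUnion]
    constructor
    · intro hv
      obtain ⟨t, ht, h⟩ := G.slope a v hv ha
      exact ⟨t, ht, hv, h⟩
    · rintro ⟨t, ht, h⟩; exact h.1
  have h2 := Set.Finite.ncard_biUnion T.finite_toSet (s := fun t => fib Z η t a)
    (fun t _ => G.fib_fin t ha) (by
      intro t ht t' ht' hne
      rw [Function.onFun, Set.disjoint_left]
      intro v hv hv'
      refine hne (slope_eq (κ := 0) hT ht ht' hv.2 hv'.2 ?_ ?_ hη.le ?_ ?_ (hR.trans ha))
      · simp
      · simp
      · norm_num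
      · simpa using h3η)
  have h3 : (⋃ t ∈ (T : Set ℂ), fib Z η t a) = ⋃ t ∈ T, fib Z η t a := by simp
  rw [this, ← h3, h2, finsum_mem_coe_finset]

lemma main_le (G : Good Z T d η R) (G' : Good Z' T' d' η R) (hT : SlopeSep T θ L)
    (hT' : SlopeSep T' θ L)
    (hf : BL Z Z' f g M R)
    (hg : BL Z' Z g f M R) (hη : 0 < η) (hη1 : η ≤ 1) (hL : 0 ≤ L) (hM : 2 ≤ M) (hR : 0 < R)
    (hK : 3 * η + M ^ 2 * (4 + 2 * L) * η * (1 + L) < θ) (hK1 : M ^ 2 * (4 + 2 * L) * η ≤ 1)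
    (hlam : M ^ 2 * (4 * η + (1 + L) * (6 * η * M ^ 2)) < 1 / 2) : d ≤ d' := by
  have hM1 : 1 ≤ M := by linarith
  have q1 : 0 ≤ η * M ^ 2 := by positivity
  have q2 : 0 ≤ η * M ^ 2 * L := by positivity
  have q3 : 0 ≤ η * M ^ 2 * (1 + L) := by positivity
  have q4 : 0 ≤ η * M ^ 2 * (1 + L) * L := by positivity
  have q5 : 0 ≤ η * M ^ 2 * (1 + L) * M ^ 2 := by positivity
  have q6 : 0 ≤ η * M ^ 2 * (M ^ 2 - 1) := by
    have : 0 ≤ M ^ 2 - 1 := by nlinarith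
    positivity
  have q7 : 0 ≤ η * M ^ 2 * L * M ^ 2 := by positivity
  have h3η : 3 * η < θ := by nlinarith
  have hκ1 : 2 * η * M ^ 2 ≤ 1 := by nlinarith
  have hκ : 3 * η + 2 * η * M ^ 2 * (1 + L) < θ := by nlinarith
  have hρ : 3 * η * M ^ 2 ≤ 1 / 2 := by nlinarith
  have hMR : 2 * R ≤ M * R := by gcongr
  have hMR1 : M * R ≤ M * (2 * R) := by gcongr; linarith
  have hMR2 : M * (M * R) ≤ M * (M * (2 * R)) := by gcongr
  have hMR3 : M * R ≤ M * (M * R) := by nlinarith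
  set a : ℂ := ((M * (M * (2 * R)) + 1 : ℝ) : ℂ) with hadef
  have ha : M * (M * (2 * R)) < ‖a‖ := by
    rw [hadef, Complex.norm_real, Real.norm_of_nonneg (by positivity)]
    linarith
  have haR : R < ‖a‖ := by linarith
  have ha2R : 2 * R < ‖a‖ := by linarith
  have H : ∀ t, ∃ s : ℂ, ∃ v, t ∈ T → (fib Z η t a).Nonempty → s ∈ T' ∧ v ∈ fib Z η t a ∧
      ‖(f (a, v)).2 - s * (f (a, v)).1‖ ≤ η * ‖(f (a, v)).1‖ ∧
      (fib Z η t a).ncard ≤ (fib Z' η s a).ncard := by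
    intro t
    by_cases h : t ∈ T ∧ (fib Z η t a).Nonempty
    · obtain ⟨s, hs, v, b, hb, h1, h2, h3⟩ :=
        fib_le G G' hT hT' hf hg hη hL hM1 hR hκ1 hκ hρ hlam h.1 ha h.2
      refine ⟨s, v, fun _ _ => ⟨hs, h1, h2, h3.trans_eq ?_⟩⟩
      exact card_const G' hT' hη.le h3η hR.le hL hs hb ha2R
    · exact ⟨0, 0, fun h1 h2 => absurd ⟨h1, h2⟩ h⟩
  choose S V hS using H
  classical
  rw [← card_sum G hT hη h3η haR hR hL, ← card_sum G' hT' hη h3η haR hR hL]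
  set T₀ := T.filter (fun t => (fib Z η t a).Nonempty) with hT₀
  have e1 : ∑ t ∈ T, (fib Z η t a).ncard = ∑ t ∈ T₀, (fib Z η t a).ncard := by
    symm
    refine Finset.sum_subset (Finset.filter_subset _ _) ?_
    intro t ht ht'
    have : ¬ (fib Z η t a).Nonempty := fun h => ht' (Finset.mem_filter.2 ⟨ht, h⟩)
    rw [Set.not_nonempty_iff_eq_empty.1 this, Set.ncard_empty]
  have hinj : Set.InjOn S T₀ := by
    intro t ht t' ht' heq
    obtain ⟨ht1, ht2⟩ := Finset.mem_filter.1 (Finset.mem_coe.1 ht)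
    obtain ⟨ht1', ht2'⟩ := Finset.mem_filter.1 (Finset.mem_coe.1 ht')
    obtain ⟨a1, a2, a3, a4⟩ := hS t ht1 ht2
    obtain ⟨a1', a2', a3', a4'⟩ := hS t' ht1' ht2'
    refine chain (s := S t) (x := (a, V t)) (x' := (a, V t')) G hT hT' hf hg hη hη1 hL hM1 hR hK hK1
      a1 ht1 ht1' ?_ a2.1 a2'.1 (lt_of_le_of_lt hMR2 ha) (lt_of_le_of_lt hMR2 ha) a3
      (by rw [heq]; exact a3') a2.2 a2'.2
    intro b hb
    have hpos : 0 < (fib Z η t a).ncard := (Set.ncard_pos (G.fib_fin t haR)).2 ht2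
    have := card_const G' hT' hη.le h3η hR.le hL a1 (b := b) (b' := a) (by linarith) ha2R
    exact Set.nonempty_of_ncard_ne_zero (by omega)
  rw [e1]
  calc ∑ t ∈ T₀, (fib Z η t a).ncard ≤ ∑ t ∈ T₀, (fib Z' η (S t) a).ncard := by
        refine Finset.sum_le_sum fun t ht => ?_
        obtain ⟨ht1, ht2⟩ := Finset.mem_filter.1 ht
        exact (hS t ht1 ht2).2.2.2
    _ = ∑ s ∈ T₀.image S, (fib Z' η s a).ncard := by rw [Finset.sum_image hinj]
    _ ≤ ∑ s ∈ T', (fib Z' η s a).ncard := by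
        refine Finset.sum_le_sum_of_subset ?_
        intro s hs
        obtain ⟨t, ht, rfl⟩ := Finset.mem_image.1 hs
        obtain ⟨ht1, ht2⟩ := Finset.mem_filter.1 ht
        exact (hS t ht1 ht2).1

lemma exists_sep (T T' : Finset ℂ) : ∃ θ L : ℝ, 0 < θ ∧ θ ≤ 1 ∧ 0 ≤ L ∧ SlopeSep T θ L ∧
    SlopeSep T' θ L := by
  classical
  have key : ∀ T : Finset ℂ, ∃ θ : ℝ, 0 < θ ∧ θ ≤ 1 ∧ ∀ t ∈ T, ∀ t' ∈ T, t ≠ t' → θ ≤ ‖t - t'‖ := by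
    intro T
    have h : ∀ᶠ θ : ℝ in nhdsWithin 0 (Ioi 0), ∀ p ∈ T ×ˢ T, p.1 ≠ p.2 → θ ≤ ‖p.1 - p.2‖ := by
      rw [Filter.eventually_all_finset]
      intro p _
      by_cases hp : p.1 = p.2
      · exact Filter.Eventually.of_forall fun θ h => absurd hp h
      · have : 0 < ‖p.1 - p.2‖ := norm_pos_iff.2 (sub_ne_zero.2 hp)
        filter_upwards [mem_nhdsWithin_of_mem_nhds (Iic_mem_nhds this)] with θ hθ _
        exact hθ
    have h1' : ∀ᶠ θ : ℝ in nhdsWithin 0 (Ioi 0), θ ≤ 1 :=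
      mem_nhdsWithin_of_mem_nhds (Iic_mem_nhds one_pos)
    have h0 : ∀ᶠ θ : ℝ in nhdsWithin 0 (Ioi 0), 0 < θ := self_mem_nhdsWithin
    obtain ⟨θ, h1, h2, h3⟩ := (h.and (h1'.and h0)).exists
    exact ⟨θ, h3, h2, fun t ht t' ht' hne => h1 (t, t') (Finset.mem_product.2 ⟨ht, ht'⟩) hne⟩
  obtain ⟨θ, h1, h2, h3⟩ := key T
  obtain ⟨θ', h1', h2', h3'⟩ := key T'
  refine ⟨min θ θ', ∑ t ∈ T ∪ T', ‖t‖, lt_min h1 h1', (min_le_left _ _).trans h2,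
    Finset.sum_nonneg fun _ _ => norm_nonneg _, ⟨?_, ?_⟩, ⟨?_, ?_⟩⟩
  · intro t ht t' ht' hne; exact (min_le_left _ _).trans (h3 t ht t' ht' hne)
  · intro t ht
    exact Finset.single_le_sum (f := fun t : ℂ => ‖t‖) (fun _ _ => norm_nonneg _)
      (Finset.mem_union_left _ ht)
  · intro t ht t' ht' hne; exact (min_le_right _ _).trans (h3' t ht t' ht' hne)
  · intro t ht
    exact Finset.single_le_sum (f := fun t : ℂ => ‖t‖) (fun _ _ => norm_nonneg _)
      (Finset.mem_union_right _ ht)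

lemma Good.mono {R' : ℝ} (G : Good Z T d η R) (h : R ≤ R') : Good Z T d η R' :=
  ⟨fun u hu => G.fin u (by linarith), fun u hu => G.card u (by linarith),
    fun u v hz hu => G.slope u v hz (by linarith),
    fun a r hb => G.lift a r (fun u hu => lt_of_le_of_lt h (hb u hu))⟩

lemma BL.mono {R' : ℝ} (G : BL Z Z' f g M R) (h : R ≤ R') : BL Z Z' f g M R' :=
  ⟨fun x hx hu => G.mem x hx (by linarith), fun x hx hu => G.inv x hx (by linarith),
    fun x hx hu => G.lo x hx (by linarith), fun x hx hu => G.up x hx (by linarith),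
    fun x hx x' hx' h1 h2 => G.lip x hx x' hx' (by linarith) (by linarith)⟩

theorem deg_le (G : ∀ η : ℝ, 0 < η → ∃ R, Good Z T d η R)
    (G' : ∀ η : ℝ, 0 < η → ∃ R, Good Z' T' d' η R)
    (hf : BL Z Z' f g M R) (hg : BL Z' Z g f M R) (hM : 2 ≤ M) : d ≤ d' := by
  obtain ⟨θ, L, hθ, hθ1, hL, hT, hT'⟩ := exists_sep T T'
  have hM1 : 1 ≤ M := by linarith
  set N := M ^ 4 * (1 + L) ^ 2 with hN
  have hM2 : 1 ≤ M ^ 2 := one_le_pow₀ hM1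
  have hM4 : M ^ 2 ≤ M ^ 4 := pow_le_pow_right₀ hM1 (by norm_num)
  have hNpos : 0 < N := by positivity
  obtain ⟨η, hη0, hηN⟩ : ∃ η : ℝ, 0 < η ∧ η * N = θ / 100 :=
    ⟨θ / 100 / N, by positivity, by field_simp⟩
  have b0 : η * 1 ≤ η * N := by
    gcongr
    rw [hN]
    exact one_le_mul_of_one_le_of_one_le (by linarith) (one_le_pow₀ (by linarith))
  have b1 : η * (M ^ 2 * (1 + L) ^ 2) ≤ η * N := by rw [hN]; gcongr
  have b2 : η * (M ^ 2 * (1 + L)) ≤ η * (M ^ 2 * (1 + L) ^ 2) := by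
    gcongr; nlinarith
  have b3 : η * (M ^ 2 * 1) ≤ η * (M ^ 2 * (1 + L)) := by
    gcongr; linarith
  have b4 : η * (M ^ 4 * (1 + L)) ≤ η * N := by
    rw [hN]; gcongr; nlinarith
  obtain ⟨R₁, h1⟩ := G η hη0
  obtain ⟨R₂, h2⟩ := G' η hη0
  set R₃ := max (max R₁ R₂) (max R 1)
  refine main_le (R := R₃) (h1.mono (by simp [R₃])) (h2.mono (by simp [R₃])) hT hT'
    (hf.mono (by simp [R₃])) (hg.mono (by simp [R₃])) hη0 (by linarith) hL hM
    (lt_of_lt_of_le one_pos (by simp [R₃])) ?_ ?_ ?_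
  · have : M ^ 2 * (4 + 2 * L) * η * (1 + L) ≤ 4 * (η * (M ^ 2 * (1 + L) ^ 2)) := by
      have : 0 ≤ η * M ^ 2 * (1 + L) * L := by positivity
      nlinarith
    linarith
  · have : M ^ 2 * (4 + 2 * L) * η ≤ 4 * (η * (M ^ 2 * (1 + L))) := by
      have : 0 ≤ η * M ^ 2 * L := by positivity
      nlinarith
    linarith
  · have : M ^ 2 * (4 * η + (1 + L) * (6 * η * M ^ 2)) = 4 * (η * (M ^ 2 * 1)) + 6 * (η * (M ^ 4 * (1 + L))) := by
      ring
    linarith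
end
end

section
abbrev MP := MvPolynomial (Fin 2) ℂ

lemma fin_inter {q s : MP} (hq : Irreducible q) (hs : ¬ q ∣ s) :
    {x : Fin 2 → ℂ | MvPolynomial.eval x q = 0 ∧ MvPolynomial.eval x s = 0}.Finite := by
  set I : Ideal MP := Ideal.span {q, s} with hI
  have hdim : ringKrullDim MP = 2 := by
    have := MvPolynomial.ringKrullDim_of_isNoetherianRing (R := ℂ) (ι := Fin 2)
    rw [this, ringKrullDim_eq_zero_of_field]; simp
  have hfin := I.finite_minimalPrimes_of_isNoetherianRing
  let m : (Fin 2 → ℂ) → Ideal MP := fun x => RingHom.ker (MvPolynomial.eval x)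
  have hm : ∀ x, (m x).IsPrime := fun x => RingHom.ker_isPrime _
  refine Set.Finite.of_finite_image (f := m) (hfin.subset ?_) ?_
  · rintro _ ⟨x, ⟨hx1, hx2⟩, rfl⟩
    have hle : I ≤ m x := by
      rw [hI, Ideal.span_le]
      rintro y (rfl | rfl)
      · exact hx1
      · exact hx2
    refine ⟨⟨hm x, hle⟩, ?_⟩
    rintro p ⟨hp, hIp⟩ hpm
    by_contra hne
    have hlt : p < m x := lt_of_le_not_ge hpm hne
    have hqp : (Ideal.span {q}).IsPrime := (Ideal.span_singleton_prime hq.ne_zero).2 hq.prime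
    have h1 : (⊥ : Ideal MP) < Ideal.span {q} := by
      rw [bot_lt_iff_ne_bot, Ne, Ideal.span_singleton_eq_bot]; exact hq.ne_zero
    have h2 : Ideal.span {q} < p := by
      refine lt_of_le_of_ne ?_ ?_
      · rw [Ideal.span_singleton_le_iff_mem]; exact hIp (Ideal.subset_span (by simp))
      · rintro h
        have : s ∈ Ideal.span {q} := h ▸ hIp (Ideal.subset_span (by simp))
        exact hs (Ideal.mem_span_singleton.1 this)
    let a0 : PrimeSpectrum MP := ⟨⊥, Ideal.isPrime_bot⟩
    let a1 : PrimeSpectrum MP := ⟨_, hqp⟩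
    let a2 : PrimeSpectrum MP := ⟨p, hp⟩
    let a3 : PrimeSpectrum MP := ⟨m x, hm x⟩
    let S : LTSeries (PrimeSpectrum MP) := LTSeries.mk 3 ![a0, a1, a2, a3] (by
      rw [Fin.strictMono_iff_lt_succ]
      intro i
      fin_cases i
      · exact h1
      · exact h2
      · exact hlt)
    have := Order.LTSeries.length_le_krullDim S
    have h3 : S.length = 3 := by simp [S]
    rw [h3] at this
    change _ ≤ ringKrullDim MP at this
    rw [hdim] at this
    exact absurd this (by decide)
  · intro x _ y _ hxy
    funext i
    have : (MvPolynomial.X i - MvPolynomial.C (x i) : MP) ∈ m x := by simp [m, RingHom.mem_ker]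
    rw [hxy] at this
    simp only [m, RingHom.mem_ker, map_sub, MvPolynomial.eval_X, MvPolynomial.eval_C] at this
    exact (sub_eq_zero.1 this).symm

/-- zero set -/
def VV (p : MP) : Set (EuclideanSpace ℂ (Fin 2)) := {x | MvPolynomial.eval (fun i => x i) p = 0}

lemma fin_inter' {q s : MP} (hq : Irreducible q) (hs : ¬ q ∣ s) : (VV q ∩ VV s).Finite := by
  have := fin_inter hq hs
  refine Set.Finite.of_finite_image (f := fun x : EuclideanSpace ℂ (Fin 2) => fun i => x i) (this.subset ?_) ?_
  · rintro _ ⟨x, hx, rfl⟩; exact hx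
  · intro x _ y _ h
    ext i; exact congrFun h i

lemma alg_VV (p : MP) : IsAlgebraicSet (VV p) := ⟨{p}, by simp [VV]⟩

lemma alg_inter {A B : Set (EuclideanSpace ℂ (Fin 2))} (hA : IsAlgebraicSet A) (hB : IsAlgebraicSet B) :
    IsAlgebraicSet (A ∩ B) := by
  classical
  obtain ⟨S, rfl⟩ := hA
  obtain ⟨T, rfl⟩ := hB
  refine ⟨S ∪ T, ?_⟩
  ext x
  simp only [Set.mem_inter_iff, Set.mem_ofPred_eq, Finset.mem_union]
  constructor
  · rintro ⟨h1, h2⟩ p (h | h)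
    exacts [h1 p h, h2 p h]
  · intro h
    exact ⟨fun p hp => h p (Or.inl hp), fun p hp => h p (Or.inr hp)⟩

lemma irr_curve {C : Set (EuclideanSpace ℂ (Fin 2))} (hC : IsIrreducibleAlgebraicCurve C) :
    ∃ q : MP, Irreducible q ∧ C = VV q := by
  obtain ⟨⟨S, hS⟩, hinf, hmin⟩ := hC
  have hC : IsAlgebraicSet C := ⟨S, hS⟩
  have key : ∀ p : MP, (C ∩ VV p).Infinite → C ⊆ VV p := by
    intro p hp
    by_contra h
    refine hp (hmin _ (alg_inter hC (alg_VV p)) ⟨inter_subset_left, fun h' => h ?_⟩)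
    exact fun x hx => (h' hx).2
  have hne : ∃ p : MP, p ≠ 0 ∧ C ⊆ VV p := by
    by_contra! hcon
    have hS0 : ∀ p ∈ S, p = 0 := by
      intro p hp
      by_contra h
      refine hcon p h ?_
      intro x hx
      rw [hS] at hx
      exact hx p hp
    have hCu : ∀ x, x ∈ C := by
      intro x
      rw [hS]
      intro p hp
      rw [hS0 p hp]; simp
    refine hcon (MvPolynomial.X 0) (MvPolynomial.X_ne_zero _) (key _ ?_)
    have : Function.Injective (fun z : ℂ => (!₂[0, z] : EuclideanSpace ℂ (Fin 2))) := by
      intro z w h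
      simpa using congrArg (fun x => x 1) h
    refine (Set.infinite_range_of_injective this).mono ?_
    rintro _ ⟨z, rfl⟩
    exact ⟨hCu _, by simp [VV]⟩
  obtain ⟨p, hp0, hp⟩ := hne
  have hq : ∃ q : MP, Irreducible q ∧ C ⊆ VV q := by
    induction p using WfDvdMonoid.induction_on_irreducible with
    | zero => exact absurd rfl hp0
    | unit u hu =>
      exfalso
      obtain ⟨x, hx⟩ := hinf.nonempty
      have := hp hx
      exact (hu.map (MvPolynomial.eval (fun i => x i))).ne_zero this
    | mul a q ha hq ih =>
      have hun : C = (C ∩ VV q) ∪ (C ∩ VV a) := by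
        ext x
        constructor
        · intro hx
          have : MvPolynomial.eval (fun i => x i) (q * a) = 0 := hp hx
          rw [map_mul] at this
          rcases mul_eq_zero.1 this with h | h
          · exact Or.inl ⟨hx, h⟩
          · exact Or.inr ⟨hx, h⟩
        · rintro (h | h) <;> exact h.1
      have : (C ∩ VV q).Infinite ∨ (C ∩ VV a).Infinite := by
        rw [← Set.infinite_union, ← hun]; exact hinf
      rcases this with h | h
      · exact ⟨q, hq, key q h⟩
      · exact ih ha (key a h)
  obtain ⟨q, hq, hCq⟩ := hq
  refine ⟨q, hq, hCq.antisymm ?_⟩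
  intro x hx
  rw [hS]
  intro s hs
  have hCs : C ⊆ VV s := by
    intro y hy
    rw [hS] at hy
    exact hy s hs
  have : q ∣ s := by
    by_contra h
    exact hinf ((fin_inter' hq h).subset fun y hy => ⟨hCq hy, hCs hy⟩)
  obtain ⟨r, rfl⟩ := this
  rw [map_mul, hx, zero_mul]

/-- reduced equation of a curve -/
lemma curve_eq {X : Set (EuclideanSpace ℂ (Fin 2))} (hX : IsAlgebraicCurve X) :
    ∃ (F : Finset (Set (EuclideanSpace ℂ (Fin 2)))) (q : Set (EuclideanSpace ℂ (Fin 2)) → MP),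
      (∀ C ∈ F, Irreducible (q C)) ∧ (∀ C ∈ F, ∀ C' ∈ F, C ≠ C' → ¬ q C ∣ q C') ∧
      X = VV (∏ C ∈ F, q C) ∧ curveDegree X = (∏ C ∈ F, q C).totalDegree := by
  classical
  obtain ⟨F, hF, hX⟩ := hX
  have : ∀ C, ∃ q : MP, C ∈ F → Irreducible q ∧ C = VV q := by
    intro C
    by_cases h : C ∈ F
    · obtain ⟨q, hq⟩ := irr_curve (hF C h)
      exact ⟨q, fun _ => hq⟩
    · exact ⟨0, fun h' => absurd h' h⟩
  choose q hq using this
  have hnd : ∀ C ∈ F, ∀ C' ∈ F, C ≠ C' → ¬ q C ∣ q C' := by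
    intro C hC C' hC' hne hd
    have := (hq C hC).1.associated_of_dvd (hq C' hC').1 hd
    apply hne
    rw [(hq C hC).2, (hq C' hC').2]
    obtain ⟨u, hu⟩ := this
    ext x
    rw [VV, VV, ← hu]
    simp only [Set.mem_ofPred_eq, map_mul]
    have := (u.isUnit.map (MvPolynomial.eval (fun i => x i))).ne_zero
    constructor
    · intro h; rw [h, zero_mul]
    · intro h; exact (mul_eq_zero.1 h).resolve_right this
  have hXV : X = VV (∏ C ∈ F, q C) := by
    rw [hX]
    ext x
    simp only [Set.mem_iUnion, VV, Set.mem_ofPred_eq, map_prod, Finset.prod_eq_zero_iff]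
    constructor
    · rintro ⟨C, hC, hx⟩
      refine ⟨C, hC, ?_⟩
      rw [(hq C hC).2] at hx
      exact hx
    · rintro ⟨C, hC, hx⟩
      refine ⟨C, hC, ?_⟩
      rw [(hq C hC).2]
      exact hx
  have hne : (∏ C ∈ F, q C) ≠ 0 := Finset.prod_ne_zero_iff.2 fun C hC => (hq C hC).1.ne_zero
  refine ⟨F, q, fun C hC => (hq C hC).1, hnd, hXV, ?_⟩
  rw [curveDegree]
  apply le_antisymm
  · refine Nat.sInf_le ⟨_, hne, rfl, ?_⟩
    intro x hx
    rw [hXV] at hx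
    exact hx
  · refine le_csInf ⟨_, _, hne, rfl, fun x hx => by rw [hXV] at hx; exact hx⟩ ?_
    rintro d ⟨P, hP, rfl, hPX⟩
    have hdvd : (∏ C ∈ F, q C) ∣ P := by
      apply Finset.prod_dvd_of_isRelPrime
      · intro C hC C' hC' hne
        exact ((hq C hC).1.isRelPrime_iff_not_dvd).2 (hnd C hC C' hC' hne)
      · intro C hC
        by_contra h
        refine (hF C hC).2.1 ((fin_inter' (hq C hC).1 h).subset fun y hy => ⟨?_, ?_⟩)
        · rw [← (hq C hC).2]; exact hy
        · refine hPX y ?_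
          rw [hX]
          exact Set.mem_biUnion hC hy
    obtain ⟨r, rfl⟩ := hdvd
    rw [MvPolynomial.totalDegree_mul_of_isDomain hne (right_ne_zero_of_mul hP)]
    omega
end

section
open MvPolynomial in
def shearHom (c : ℂ) : MP →ₐ[ℂ] MP := aeval ![X 0 + C c * X 1, X 1]

open MvPolynomial in
lemma shear_comp (c : ℂ) : (shearHom c).comp (shearHom (-c)) = AlgHom.id ℂ MP := by
  ext1 i
  fin_cases i <;> simp [shearHom]

def shear (c : ℂ) : MP ≃ₐ[ℂ] MP := AlgEquiv.ofAlgHom (shearHom c) (shearHom (-c))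
  (shear_comp c) (by simpa using shear_comp (-c))

open MvPolynomial in
lemma eval_shear (c u v : ℂ) (P : MP) : eval ![u, v] (shear c P) = eval ![u + c * v, v] P := by
  change eval ![u, v] (shearHom c P) = _
  induction P using MvPolynomial.induction_on with
  | C a => simp [shearHom]
  | add p q hp hq => simp [hp, hq]
  | mul_X p i hp =>
    rw [map_mul, map_mul, hp, map_mul]
    fin_cases i <;> simp [shearHom]

open MvPolynomial in
lemma shear_hom (c : ℂ) {P : MP} {k : ℕ} (hP : P.IsHomogeneous k) :
    (shear c P).IsHomogeneous k := by
  change (shearHom c P).IsHomogeneous k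
  have := hP.aeval (φ := P) (n := 1) (![X 0 + C c * X 1, X 1] : Fin 2 → MP) (by
    intro i
    fin_cases i
    · exact (isHomogeneous_X _ _).add (isHomogeneous_C_mul_X _ _)
    · exact isHomogeneous_X _ _)
  rw [one_mul] at this
  exact this

/-- normalized polynomial -/
structure Nrm (Q : MP) (d : ℕ) (e : ℂ) : Prop where
  deg : Q.totalDegree ≤ d
  coe : MvPolynomial.coeff (Finsupp.single 1 d) Q = e
  ne : e ≠ 0

open MvPolynomial in
lemma eval_eq2 (Q : MP) (u v : ℂ) : eval ![u, v] Q =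
    ∑ m ∈ Q.support, coeff m Q * (u ^ m 0 * v ^ m 1) := by
  rw [eval_eq']
  simp [Fin.prod_univ_two]

lemma deg2 {Q : MP} {d : ℕ} (h : Q.totalDegree ≤ d) {m : Fin 2 →₀ ℕ} (hm : m ∈ Q.support) :
    m 0 + m 1 ≤ d := by
  have := MvPolynomial.le_totalDegree hm
  rw [Finsupp.sum_fintype _ _ (by simp)] at this
  simp [Fin.sum_univ_two] at this
  omega

lemma deg2_hom {Q : MP} {d : ℕ} (h : Q.IsHomogeneous d) {m : Fin 2 →₀ ℕ} (hm : m ∈ Q.support) :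
    m 0 + m 1 = d := by
  have := h.degree_eq_sum_deg_support hm
  rw [this, ← Finsupp.degree_apply, Finsupp.degree_eq_sum]
  simp [Fin.sum_univ_two]

lemma eq_single {m : Fin 2 →₀ ℕ} (d : ℕ) (h0 : m 0 = 0) (h1 : m 1 = d) :
    m = Finsupp.single 1 d := by
  ext i; fin_cases i <;> simp [h0, h1]

open MvPolynomial in
lemma eval01 {P : MP} {d : ℕ} (h : P.IsHomogeneous d) :
    eval ![0, 1] P = coeff (Finsupp.single 1 d) P := by
  rw [eval_eq2]
  rw [Finset.sum_eq_single (Finsupp.single 1 d)]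
  · simp
  · intro m hm hne
    have h1 : m 0 + m 1 = d := deg2_hom h hm
    have : m 0 ≠ 0 := fun h0 => hne (eq_single d h0 (by omega))
    simp [this]
  · intro h
    simp [notMem_support_iff.1 h]

open MvPolynomial in
lemma exists_shear {P : MP} (hP : P ≠ 0) : ∃ c e, Nrm (shear c P) P.totalDegree e := by
  set d := P.totalDegree
  set Pd := homogeneousComponent d P with hPd
  have hne : Pd ≠ 0 := by
    obtain ⟨m, hm, hmd⟩ := Finset.exists_mem_eq_sup P.support (support_nonempty.2 hP)
      (fun s => s.sum fun _ e => e)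
    intro h
    have h1 : coeff m Pd = coeff m P := by
      rw [hPd, coeff_homogeneousComponent, if_pos]
      rw [Finsupp.degree_eq_sum]
      change _ = P.totalDegree
      rw [MvPolynomial.totalDegree, hmd, Finsupp.sum_fintype _ _ (by simp)]
    rw [h, coeff_zero] at h1
    exact (mem_support_iff.1 hm) h1.symm
  have hhom : Pd.IsHomogeneous d := homogeneousComponent_isHomogeneous d P
  have hc : ∃ c, eval ![c, 1] Pd ≠ 0 := by
    by_contra! hcon
    apply hne
    have : Pd * X 1 = 0 := by
      apply MvPolynomial.funext
      intro x
      rw [map_mul, eval_X, map_zero]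
      by_cases h1 : x 1 = 0
      · rw [h1, mul_zero]
      · have hx : x = ![x 0, x 1] := by ext i; fin_cases i <;> rfl
        have h2 := hcon (x 0 / x 1)
        have h3 : eval x Pd = x 1 ^ d * eval ![x 0 / x 1, 1] Pd := by
          conv_lhs => rw [hx]
          rw [eval_eq2, eval_eq2, Finset.mul_sum]
          refine Finset.sum_congr rfl fun m hm => ?_
          have h4 : m 0 + m 1 = d := deg2_hom hhom hm
          rw [← h4, div_pow, pow_add, one_pow]
          field_simp
        rw [h3, h2]; simp
    exact (mul_eq_zero.1 this).resolve_right (X_ne_zero _)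
  obtain ⟨c, hc⟩ := hc
  have hdec : shear c P = ∑ i ∈ Finset.range (d + 1), shear c (homogeneousComponent i P) := by
    conv_lhs => rw [← sum_homogeneousComponent P]
    rw [map_sum]
  refine ⟨c, eval ![c, 1] Pd, ?_, ?_, hc⟩
  · rw [hdec]
    refine (totalDegree_finsetSum _ _).trans (Finset.sup_le fun i hi => ?_)
    refine (shear_hom c (homogeneousComponent_isHomogeneous i P)).totalDegree_le.trans ?_
    have := Finset.mem_range.1 hi; omega
  · rw [hdec, coeff_sum, Finset.sum_eq_single d]
    · rw [← eval01 (shear_hom c hhom), eval_shear]; simp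
    · intro i hi hne
      apply (shear_hom c (homogeneousComponent_isHomogeneous i P)).coeff_eq_zero
      simp [hne.symm]
    · simp

/-- restriction to a vertical line -/
def line (Q : MP) (u : ℂ) : Polynomial ℂ := MvPolynomial.aeval ![Polynomial.C u, Polynomial.X] Q

lemma eval_line (Q : MP) (u v : ℂ) : (line Q u).eval v = MvPolynomial.eval ![u, v] Q := by
  rw [line]
  induction Q using MvPolynomial.induction_on with
  | C a => simp
  | add p q hp hq => simp [hp, hq]
  | mul_X p i hp =>
    rw [map_mul, map_mul, Polynomial.eval_mul, hp]
    fin_cases i <;> simp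

lemma deriv_line (Q : MP) (u : ℂ) :
    Polynomial.derivative (line Q u) = line (MvPolynomial.pderiv 1 Q) u := by
  simp only [line]
  induction Q using MvPolynomial.induction_on with
  | C a => simp
  | add p q hp hq => simp [hp, hq]
  | mul_X p i hp =>
    rw [map_mul, Polynomial.derivative_mul, hp, Derivation.leibniz]
    fin_cases i
    · simp [mul_comm]
    · simp [mul_comm]; ring

lemma line_eq (Q : MP) (u : ℂ) : line Q u = ∑ m ∈ Q.support,
    Polynomial.C (MvPolynomial.coeff m Q * u ^ m 0) * Polynomial.X ^ m 1 := by
  rw [line, MvPolynomial.aeval_def, MvPolynomial.eval₂_eq']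
  simp [Fin.prod_univ_two, mul_assoc]

lemma line_deg {Q : MP} {d : ℕ} {e : ℂ} (hQ : Nrm Q d e) (u : ℂ) :
    (line Q u).natDegree = d ∧ (line Q u).leadingCoeff = e := by
  have hle : (line Q u).natDegree ≤ d := by
    rw [line_eq]
    refine Polynomial.natDegree_sum_le_of_forall_le _ _ fun m hm => ?_
    refine (Polynomial.natDegree_C_mul_X_pow_le _ _).trans ?_
    have := deg2 hQ.deg hm; omega
  have hco : (line Q u).coeff d = e := by
    rw [line_eq, Polynomial.finsetSum_coeff, Finset.sum_eq_single (Finsupp.single 1 d)]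
    · simp [hQ.coe]
    · intro m hm hne
      rw [Polynomial.coeff_C_mul_X_pow, if_neg]
      intro h
      have := deg2 hQ.deg hm
      exact hne (eq_single d (by omega) h.symm)
    · intro h
      simp [MvPolynomial.notMem_support_iff.1 h]
  have : (line Q u).natDegree = d :=
    Polynomial.natDegree_eq_of_le_of_coeff_ne_zero hle (by rw [hco]; exact hQ.ne)
  refine ⟨this, ?_⟩
  rw [Polynomial.leadingCoeff, this, hco]

/-- discriminant locus is finite -/
lemma disc_fin {ι : Type*} (F : Finset ι) (q : ι → MP) (hq : ∀ i ∈ F, Irreducible (q i))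
    (hnd : ∀ i ∈ F, ∀ j ∈ F, i ≠ j → ¬ q i ∣ q j) {d : ℕ} {e : ℂ} (hQ : Nrm (∏ i ∈ F, q i) d e) :
    {x : Fin 2 → ℂ | MvPolynomial.eval x (∏ i ∈ F, q i) = 0 ∧
      MvPolynomial.eval x (MvPolynomial.pderiv 1 (∏ i ∈ F, q i)) = 0}.Finite := by
  classical
  have hself : ∀ i ∈ F, {x : Fin 2 → ℂ | MvPolynomial.eval x (q i) = 0 ∧
      MvPolynomial.eval x (MvPolynomial.pderiv 1 (q i)) = 0}.Finite := by
    intro i hi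
    by_cases hd : q i ∣ MvPolynomial.pderiv 1 (q i)
    · convert Set.finite_empty
      rw [Set.eq_empty_iff_forall_notMem]
      rintro x ⟨hx, -⟩
      have hx' : x = ![x 0, x 1] := by ext i; fin_cases i <;> rfl
      have h0 : line (q i) (x 0) = 0 := by
        have h1 : line (q i) (x 0) ∣ Polynomial.derivative (line (q i) (x 0)) := by
          rw [deriv_line]
          exact map_dvd (MvPolynomial.aeval ![Polynomial.C (x 0), Polynomial.X]) hd
        have h2 : (line (q i) (x 0)).natDegree = 0 := by
          by_contra hne
          have h3 := Polynomial.degree_derivative_lt (p := line (q i) (x 0))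
            (by rintro h; rw [h] at hne; simp at hne)
          have h4 := Polynomial.eq_zero_of_dvd_of_degree_lt h1 h3
          exact hne (Polynomial.derivative_eq_zero.1 h4)
        rw [Polynomial.eq_C_of_natDegree_eq_zero h2]
        have h5 : (line (q i) (x 0)).eval (x 1) = 0 := by
          rw [eval_line, ← hx', hx]
        rw [Polynomial.eq_C_of_natDegree_eq_zero h2, Polynomial.eval_C] at h5
        rw [h5, map_zero]
      have h6 : line (∏ i ∈ F, q i) (x 0) = 0 := by
        rw [line, map_prod]
        exact Finset.prod_eq_zero hi h0
      have h7 := (line_deg hQ (x 0)).2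
      rw [h6, Polynomial.leadingCoeff_zero] at h7
      exact hQ.ne h7.symm
    · exact fin_inter (hq i hi) hd
  have hun : (⋃ i ∈ F, ({x : Fin 2 → ℂ | MvPolynomial.eval x (q i) = 0 ∧
      MvPolynomial.eval x (MvPolynomial.pderiv 1 (q i)) = 0} ∪ ⋃ j ∈ F.erase i,
      {x : Fin 2 → ℂ | MvPolynomial.eval x (q i) = 0 ∧ MvPolynomial.eval x (q j) = 0})).Finite := by
    refine Set.Finite.biUnion F.finite_toSet fun i hi => (hself i hi).union ?_
    refine Set.Finite.biUnion (F.erase i).finite_toSet fun j hj => ?_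
    obtain ⟨h1, h2⟩ := Finset.mem_erase.1 (Finset.mem_coe.1 hj)
    exact fin_inter (hq i hi) (hnd i hi j h2 h1.symm)
  refine hun.subset ?_
  rintro x ⟨hx1, hx2⟩
  rw [map_prod, Finset.prod_eq_zero_iff] at hx1
  obtain ⟨i, hi, hx⟩ := hx1
  refine Set.mem_biUnion hi ?_
  rw [← Finset.mul_prod_erase F q hi, Derivation.leibniz] at hx2
  simp only [smul_eq_mul, map_add, map_mul, hx, zero_mul, zero_add, map_prod] at hx2
  rcases mul_eq_zero.1 hx2 with h | h
  · obtain ⟨j, hj, h⟩ := Finset.prod_eq_zero_iff.1 h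
    exact Or.inr (Set.mem_biUnion hj ⟨hx, h⟩)
  · exact Or.inl ⟨hx, h⟩
end

section
open MvPolynomial in
lemma eval_bound (G : MP) (u v : ℂ) (B : ℝ)
    (h : ∀ m ∈ G.support, ‖u‖ ^ m 0 * ‖v‖ ^ m 1 ≤ B) :
    ‖eval ![u, v] G‖ ≤ (∑ m ∈ G.support, ‖coeff m G‖) * B := by
  rw [eval_eq2, Finset.sum_mul]
  refine (norm_sum_le _ _).trans (Finset.sum_le_sum fun m hm => ?_)
  rw [norm_mul, norm_mul, norm_pow, norm_pow]
  gcongr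
  exact h m hm

open MvPolynomial in
lemma bound1 {Q : MP} {d : ℕ} {e : ℂ} (hQ : Nrm Q d e) (hd : 1 ≤ d) :
    ∃ S : ℝ, 0 ≤ S ∧ ∀ (u v : ℂ) (U : ℝ), 1 ≤ U → ‖u‖ ≤ U → U ≤ ‖v‖ →
      ‖e‖ * ‖v‖ ^ d ≤ ‖eval ![u, v] Q‖ + S * (U * ‖v‖ ^ (d - 1)) := by
  set G := Q - monomial (Finsupp.single 1 d) e with hG
  refine ⟨∑ m ∈ G.support, ‖coeff m G‖, Finset.sum_nonneg fun _ _ => norm_nonneg _, ?_⟩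
  intro u v U hU hu hv
  have hb := eval_bound G u v (U * ‖v‖ ^ (d - 1)) (by
    intro m hm
    have hv1 : 1 ≤ ‖v‖ := hU.trans hv
    have hmQ : m ≠ Finsupp.single 1 d ∧ m ∈ Q.support := by
      rw [mem_support_iff, hG, coeff_sub, coeff_monomial] at hm
      have : m ≠ Finsupp.single 1 d := by
        rintro rfl
        rw [if_pos rfl, hQ.coe, sub_self] at hm
        exact hm rfl
      refine ⟨this, ?_⟩
      rw [if_neg this.symm, sub_zero] at hm
      exact mem_support_iff.2 hm
    have hmd := deg2 hQ.deg hmQ.2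
    rcases Nat.eq_zero_or_pos (m 0) with h0 | h0
    · have h1 : m 1 ≤ d - 1 := by
        have : m 1 ≠ d := fun h => hmQ.1 (eq_single d h0 h)
        omega
      rw [h0, pow_zero]
      exact mul_le_mul hU (pow_le_pow_right₀ hv1 h1) (by positivity) (by linarith)
    · obtain ⟨k, hk⟩ : ∃ k, m 0 = k + 1 := ⟨m 0 - 1, by omega⟩
      rw [hk]
      calc ‖u‖ ^ (k + 1) * ‖v‖ ^ m 1 = ‖u‖ * (‖u‖ ^ k * ‖v‖ ^ m 1) := by ring
        _ ≤ U * (‖v‖ ^ k * ‖v‖ ^ m 1) := by gcongr; exact hu.trans hv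
        _ = U * ‖v‖ ^ (k + m 1) := by rw [pow_add]
        _ ≤ U * ‖v‖ ^ (d - 1) := by
          gcongr
          omega)
  have he : eval ![u, v] Q = eval ![u, v] G + e * v ^ d := by
    rw [hG, map_sub, eval_monomial]
    simp
  have : e * v ^ d = eval ![u, v] Q - eval ![u, v] G := by rw [he]; ring
  calc ‖e‖ * ‖v‖ ^ d = ‖e * v ^ d‖ := by rw [norm_mul, norm_pow]
    _ ≤ ‖eval ![u, v] Q‖ + ‖eval ![u, v] G‖ := by rw [this]; exact norm_sub_le _ _
    _ ≤ _ := by gcongr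

open MvPolynomial in
lemma bound2 {Q : MP} {d : ℕ} {e : ℂ} (hQ : Nrm Q d e) :
    ∃ A : ℝ, 1 ≤ A ∧ ∀ u v : ℂ, eval ![u, v] Q = 0 → ‖v‖ ≤ A * max 1 ‖u‖ := by
  rcases Nat.eq_zero_or_pos d with rfl | hd
  · refine ⟨1, le_rfl, fun u v h => ?_⟩
    exfalso
    obtain ⟨h1, h2⟩ := line_deg hQ u
    rw [← eval_line, Polynomial.eq_C_of_natDegree_eq_zero h1, Polynomial.eval_C] at h
    rw [Polynomial.leadingCoeff, h1, h] at h2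
    exact hQ.ne h2.symm
  obtain ⟨S, hS, h⟩ := bound1 hQ hd
  have he : 0 < ‖e‖ := norm_pos_iff.2 hQ.ne
  refine ⟨max 1 (S / ‖e‖), le_max_left _ _, fun u v huv => ?_⟩
  set U := max 1 ‖u‖ with hU
  have hU1 : 1 ≤ U := le_max_left _ _
  rcases le_total U ‖v‖ with hv | hv
  · have := h u v U hU1 (le_max_right _ _) hv
    rw [huv, norm_zero, zero_add] at this
    obtain ⟨k, rfl⟩ : ∃ k, d = k + 1 := ⟨d - 1, by omega⟩
    have hvp : 0 < ‖v‖ ^ k := by have : 0 < ‖v‖ := by linarith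
                                 positivity
    rw [Nat.add_sub_cancel, pow_succ] at this
    have h3 : ‖e‖ * ‖v‖ ≤ S * U := by
      refine le_of_mul_le_mul_right ?_ hvp
      linarith
    have h4 : ‖v‖ ≤ S / ‖e‖ * U := by
      rw [div_mul_eq_mul_div, le_div_iff₀ he]; linarith
    exact h4.trans (by gcongr; exact le_max_right _ _)
  · exact hv.trans (le_mul_of_one_le_left (by linarith) (le_max_left _ _))

lemma root_near (p : Polynomial ℂ) {η : ℝ} (hη : 0 < η) (τ : ℂ)
    (h : ‖p.eval τ‖ < ‖p.leadingCoeff‖ * η ^ p.natDegree) : ∃ t ∈ p.roots, ‖τ - t‖ ≤ η := by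
  by_contra! hcon
  have hs := IsAlgClosed.splits p
  have hcard : p.roots.card = p.natDegree := (Polynomial.splits_iff_card_roots.1 hs)
  have hev : p.eval τ = p.leadingCoeff * (p.roots.map fun a => τ - a).prod := by
    conv_lhs => rw [hs.eq_prod_roots]
    rw [Polynomial.eval_mul, Polynomial.eval_C, Polynomial.eval_multiset_prod, Multiset.map_map]
    simp
  have key : ∀ s : Multiset ℂ, (∀ t ∈ s, η < ‖τ - t‖) → η ^ s.card ≤ ‖(s.map fun a => τ - a).prod‖ := by
    intro s
    induction s using Multiset.induction_on with
    | empty => simp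
    | cons a s ih =>
      intro hs
      rw [Multiset.card_cons, Multiset.map_cons, Multiset.prod_cons, norm_mul, pow_succ, mul_comm]
      have := hs a (Multiset.mem_cons_self _ _)
      exact mul_le_mul this.le (ih fun t ht => hs t (Multiset.mem_cons_of_mem ht)) (by positivity)
        (norm_nonneg _)
  have := key p.roots hcon
  rw [hev, norm_mul, ← hcard] at h
  have h2 : ‖p.leadingCoeff‖ * η ^ p.roots.card ≤ ‖p.leadingCoeff‖ * ‖(p.roots.map fun a => τ - a).prod‖ := by
    gcongr
  linarith

open MvPolynomial in
lemma slope_bound {Q : MP} {d : ℕ} {e : ℂ} (hQ : Nrm Q d e) : ∃ T : Finset ℂ, ∀ η : ℝ, 0 < η →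
    ∃ R : ℝ, ∀ u v, eval ![u, v] Q = 0 → R < ‖u‖ → ∃ t ∈ T, ‖v - t * u‖ ≤ η * ‖u‖ := by
  classical
  set Qd := homogeneousComponent d Q with hQd
  have hhom : Qd.IsHomogeneous d := homogeneousComponent_isHomogeneous d Q
  have hN : Nrm Qd d e := by
    refine ⟨hhom.totalDegree_le, ?_, hQ.ne⟩
    rw [hQd, coeff_homogeneousComponent, if_pos (by simp), hQ.coe]
  obtain ⟨hp1, hp2⟩ := line_deg hN 1
  obtain ⟨A, hA, hAb⟩ := bound2 hQ
  refine ⟨(line Qd 1).roots.toFinset, fun η hη => ?_⟩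
  set G := Q - Qd with hG
  set S := ∑ m ∈ G.support, ‖coeff m G‖
  have hS : 0 ≤ S := Finset.sum_nonneg fun _ _ => norm_nonneg _
  have he : 0 < ‖e‖ := norm_pos_iff.2 hQ.ne
  refine ⟨max 1 (S * A ^ d / (‖e‖ * η ^ d)), fun u v huv hR => ?_⟩
  have hu1 : 1 < ‖u‖ := (le_max_left _ _).trans_lt hR
  have hu2 : S * A ^ d / (‖e‖ * η ^ d) < ‖u‖ := (le_max_right _ _).trans_lt hR
  have hv := hAb u v huv
  rw [max_eq_right hu1.le] at hv
  have hu0 : u ≠ 0 := norm_pos_iff.1 (by linarith)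
  have hb : ‖eval ![u, v] G‖ * ‖u‖ ≤ S * (A * ‖u‖) ^ d := by
    rcases Nat.eq_zero_or_pos d with hd | hd
    · have : G = 0 := by
        rw [hG, sub_eq_zero, hQd, hd]
        rw [homogeneousComponent_zero]
        exact totalDegree_eq_zero_iff_eq_C.1 (by have := hQ.deg; omega)
      rw [this, map_zero, norm_zero, zero_mul]; positivity
    have hb1 := eval_bound G u v ((A * ‖u‖) ^ (d - 1)) (by
      intro m hm
      have hmd : m 0 + m 1 ≤ d - 1 := by
        rw [mem_support_iff, hG, coeff_sub, hQd, coeff_homogeneousComponent] at hm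
        have hne : m.degree ≠ d := by
          intro h
          rw [if_pos h, sub_self] at hm
          exact hm rfl
        rw [if_neg hne, sub_zero] at hm
        have h1 := deg2 hQ.deg (mem_support_iff.2 hm)
        have h2 : m.degree = m 0 + m 1 := by
          rw [Finsupp.degree_eq_sum]; simp [Fin.sum_univ_two]
        omega
      have hAu : 1 ≤ A * ‖u‖ := one_le_mul_of_one_le_of_one_le hA hu1.le
      calc ‖u‖ ^ m 0 * ‖v‖ ^ m 1 ≤ (A * ‖u‖) ^ m 0 * (A * ‖u‖) ^ m 1 := by
            gcongr
            exact le_mul_of_one_le_left (norm_nonneg _) hA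
        _ = (A * ‖u‖) ^ (m 0 + m 1) := by rw [pow_add]
        _ ≤ _ := pow_le_pow_right₀ hAu hmd)
    calc ‖eval ![u, v] G‖ * ‖u‖ ≤ (S * (A * ‖u‖) ^ (d - 1)) * (A * ‖u‖) := by
          gcongr
          exact le_mul_of_one_le_left (norm_nonneg _) hA
      _ = S * (A * ‖u‖) ^ d := by
          conv_rhs => rw [show d = d - 1 + 1 by omega, pow_succ]
          ring
  have hhomev : eval ![u, v] Qd = u ^ d * eval ![1, v / u] Qd := by
    rw [eval_eq2, eval_eq2, Finset.mul_sum]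
    refine Finset.sum_congr rfl fun m hm => ?_
    rw [← deg2_hom hhom hm, pow_add, div_pow, one_pow]
    field_simp
  have hGe : eval ![u, v] G = - eval ![u, v] Qd := by rw [hG, map_sub, huv, zero_sub]
  rw [hGe, norm_neg, hhomev, norm_mul, norm_pow, mul_pow] at hb
  have hup : 0 < ‖u‖ ^ d := by positivity
  have hb2 : ‖eval ![1, v / u] Qd‖ * ‖u‖ ≤ S * A ^ d := by
    refine le_of_mul_le_mul_left ?_ hup
    linarith
  rw [div_lt_iff₀ (by positivity)] at hu2
  obtain ⟨t, ht, h⟩ := root_near (line Qd 1) hη (v / u) (by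
    rw [eval_line, hp1, hp2]
    by_contra! hcon
    have : ‖e‖ * η ^ d * ‖u‖ ≤ ‖eval ![1, v / u] Qd‖ * ‖u‖ := by gcongr
    linarith)
  refine ⟨t, Multiset.mem_toFinset.2 ht, ?_⟩
  have : v - t * u = (v / u - t) * u := by field_simp
  rw [this, norm_mul]
  gcongr

lemma card_roots {Q : MP} {d : ℕ} {e : ℂ} (hQ : Nrm Q d e) (u : ℂ)
    (h : ∀ v, MvPolynomial.eval ![u, v] Q = 0 →
      MvPolynomial.eval ![u, v] (MvPolynomial.pderiv 1 Q) ≠ 0) :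
    {v | MvPolynomial.eval ![u, v] Q = 0}.Finite ∧ {v | MvPolynomial.eval ![u, v] Q = 0}.ncard = d := by
  classical
  obtain ⟨h1, h2⟩ := line_deg hQ u
  have hne : line Q u ≠ 0 := by
    intro h0; rw [h0, Polynomial.leadingCoeff_zero] at h2; exact hQ.ne h2.symm
  have hs : {v | MvPolynomial.eval ![u, v] Q = 0} = ((line Q u).roots.toFinset : Set ℂ) := by
    ext v
    simp [Polynomial.mem_roots hne, Polynomial.IsRoot, eval_line]
  rw [hs]
  refine ⟨Finset.finite_toSet _, ?_⟩
  rw [Set.ncard_coe_finset, Multiset.toFinset_card_of_nodup]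
  · rw [← h1]; exact (Polynomial.splits_iff_card_roots.1 (IsAlgClosed.splits _))
  · rw [Multiset.nodup_iff_count_le_one]
    intro v
    rw [Polynomial.count_roots]
    by_contra! hcon
    obtain ⟨h3, h4⟩ := (Polynomial.one_lt_rootMultiplicity_iff_isRoot hne).1 hcon
    rw [deriv_line] at h4
    rw [Polynomial.IsRoot, eval_line] at h3 h4
    exact h v h3 h4
end

section
def Gf (Q : MP) (z : ℂ × ℂ) : ℂ := MvPolynomial.eval ![z.1, z.2] Q

def Ff (Q : MP) (z : ℂ × ℂ) : ℂ × ℂ := (z.1, Gf Q z)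

lemma Gf_contDiff (Q : MP) : ContDiff ℂ 1 (Gf Q) := by
  have : Gf Q = fun z : ℂ × ℂ => ∑ m ∈ Q.support, MvPolynomial.coeff m Q * (z.1 ^ m 0 * z.2 ^ m 1) := by
    funext z; exact eval_eq2 Q z.1 z.2
  rw [this]
  fun_prop

lemma Gf_deriv (Q : MP) (z : ℂ × ℂ) :
    fderiv ℂ (Gf Q) z (0, 1) = Gf (MvPolynomial.pderiv 1 Q) z := by
  have h1 : HasFDerivAt (Gf Q) (fderiv ℂ (Gf Q) z) z :=
    ((Gf_contDiff Q).differentiable one_ne_zero z).hasFDerivAt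
  have h2 : HasDerivAt (fun v : ℂ => (z.1, v)) ((0 : ℂ), (1 : ℂ)) z.2 :=
    (hasDerivAt_const _ _).prodMk (hasDerivAt_id _)
  have h3 : HasDerivAt (Gf Q ∘ fun v : ℂ => (z.1, v)) (fderiv ℂ (Gf Q) z (0, 1)) z.2 :=
    HasFDerivAt.comp_hasDerivAt z.2 h1 h2
  have h4 := (line Q z.1).hasDerivAt z.2
  have h5 : (Gf Q ∘ fun v : ℂ => (z.1, v)) = fun v => (line Q z.1).eval v := by
    funext v; simp [Gf, eval_line]
  rw [h5] at h3
  rw [h3.unique h4, deriv_line, eval_line]; rfl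

lemma Ff_local (Q : MP) (z : ℂ × ℂ) (hz : Gf (MvPolynomial.pderiv 1 Q) z ≠ 0) :
    ∃ e : OpenPartialHomeomorph (ℂ × ℂ) (ℂ × ℂ), z ∈ e.source ∧ Ff Q = e := by
  set g := fderiv ℂ (Gf Q) z with hg
  have hb : g (0, 1) ≠ 0 := by rw [hg, Gf_deriv]; exact hz
  have h1 : HasStrictFDerivAt (Gf Q) g z :=
    (Gf_contDiff Q).contDiffAt.hasStrictFDerivAt one_ne_zero
  have hlin : ∀ x : ℂ × ℂ, g x = x.1 * g (1, 0) + x.2 * g (0, 1) := by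
    intro x
    have : x = x.1 • ((1 : ℂ), (0 : ℂ)) + x.2 • ((0 : ℂ), (1 : ℂ)) := by ext <;> simp
    conv_lhs => rw [this]
    rw [map_add, map_smul, map_smul]; rfl
  let L : (ℂ × ℂ) ≃L[ℂ] (ℂ × ℂ) := ContinuousLinearEquiv.equivOfInverse
    ((ContinuousLinearMap.fst ℂ ℂ ℂ).prod g)
    ((ContinuousLinearMap.fst ℂ ℂ ℂ).prod ((g (0, 1))⁻¹ • (ContinuousLinearMap.snd ℂ ℂ ℂ -
      g (1, 0) • ContinuousLinearMap.fst ℂ ℂ ℂ)))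
    (by
      intro x
      ext
      · simp
      · simp [hlin x]
        field_simp
        ring)
    (by
      intro x
      ext
      · simp
      · change g (x.1, (g (0, 1))⁻¹ • (x.2 - g (1, 0) • x.1)) = x.2
        rw [hlin, smul_eq_mul, smul_eq_mul]
        field_simp
        ring)
  have h2 : HasStrictFDerivAt (Ff Q) (L : (ℂ × ℂ) →L[ℂ] (ℂ × ℂ)) z :=
    (hasStrictFDerivAt_fst).prodMk h1
  exact ⟨h2.toOpenPartialHomeomorph (Ff Q), h2.mem_toOpenPartialHomeomorph_source, rfl⟩

lemma Ff_cont (Q : MP) : Continuous (Ff Q) := continuous_fst.prodMk (Gf_contDiff Q).continuous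

lemma Ff_closed {Q : MP} {d : ℕ} {e : ℂ} (hQ : Nrm Q d e) (hd : 1 ≤ d) : IsClosedMap (Ff Q) := by
  apply IsProperMap.isClosedMap
  rw [isProperMap_iff_isCompact_preimage]
  refine ⟨Ff_cont Q, fun K hK => ?_⟩
  apply Metric.isCompact_of_isClosed_isBounded (hK.isClosed.preimage (Ff_cont Q))
  obtain ⟨B, hB⟩ := hK.isBounded.exists_norm_le
  obtain ⟨S, hS, h⟩ := bound1 hQ hd
  have he : 0 < ‖e‖ := norm_pos_iff.2 hQ.ne
  set U := max 1 B with hU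
  have hU1 : 1 ≤ U := le_max_left _ _
  have hUB : B ≤ U := le_max_right _ _
  rw [isBounded_iff_forall_norm_le]
  refine ⟨max U ((U + S * U) / ‖e‖), fun z hz => ?_⟩
  have h1 := hB _ hz
  have h2 : ‖z.1‖ ≤ U := ((norm_fst_le (Ff Q z)).trans h1).trans hUB
  have h3 : ‖MvPolynomial.eval ![z.1, z.2] Q‖ ≤ U := ((norm_snd_le (Ff Q z)).trans h1).trans hUB
  rw [Prod.norm_def]
  refine max_le (h2.trans (le_max_left _ _)) ?_
  rcases le_total U ‖z.2‖ with hv | hv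
  · refine le_trans ?_ (le_max_right _ _)
    have h4 := h z.1 z.2 U hU1 h2 hv
    obtain ⟨k, rfl⟩ : ∃ k, d = k + 1 := ⟨d - 1, by omega⟩
    have hvp : 1 ≤ ‖z.2‖ ^ k := one_le_pow₀ (hU1.trans hv)
    rw [Nat.add_sub_cancel, pow_succ] at h4
    have h5 : U ≤ U * ‖z.2‖ ^ k := le_mul_of_one_le_right (by linarith) hvp
    rw [le_div_iff₀ he]
    refine le_of_mul_le_mul_right ?_ (show 0 < ‖z.2‖ ^ k by linarith)
    linarith
  · exact hv.trans (le_max_left _ _)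

lemma lift_data {Q : MP} {d : ℕ} {e : ℂ} (hQ : Nrm Q d e) (hd : 1 ≤ d) {R : ℝ}
    (h : ∀ u v, R < ‖u‖ → MvPolynomial.eval ![u, v] Q = 0 →
      MvPolynomial.eval ![u, v] (MvPolynomial.pderiv 1 Q) ≠ 0)
    (a : ℂ) (r : ℝ) (hb : ∀ u ∈ ball a r, R < ‖u‖) (z : ℂ × ℂ) (hz : Gf Q z = 0)
    (hza : z.1 ∈ ball a r) :
    ∃ σ : ℂ → ℂ, ContinuousOn σ (ball a r) ∧ σ z.1 = z.2 ∧ (∀ u ∈ ball a r, Gf Q (u, σ u) = 0) ∧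
      ∀ (S : Set ℂ) (h : ℂ → ℂ × ℂ), IsPreconnected S → ContinuousOn h S →
        (∀ s ∈ S, Gf Q (h s) = 0 ∧ (h s).1 ∈ ball a r) → (∃ s ∈ S, (h s).2 = σ (h s).1) →
        ∀ s ∈ S, (h s).2 = σ (h s).1 := by
  classical
  let s : Set (ℂ × ℂ) := {w | R < ‖w.1‖ ∧ w.2 = 0}
  have hpre : ∀ w ∈ Ff Q ⁻¹' s, R < ‖w.1‖ ∧ Gf Q w = 0 := fun w hw => hw
  have hcov : IsCoveringMapOn (Ff Q) s := by
    refine (Ff_closed hQ hd).isCoveringMapOn_of_isLocalHomeomorphOn ?_ ?_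
    · rintro ⟨u, w⟩ ⟨hu, hw⟩
      simp only at hu hw
      subst hw
      refine ((card_roots hQ u (fun v => h u v hu)).1.image (fun v => (u, v))).subset ?_
      rintro ⟨u', v⟩ hv
      have hv' : (u', Gf Q (u', v)) = (u, (0 : ℂ)) := hv
      obtain ⟨rfl, h2⟩ := Prod.mk.inj hv'
      exact ⟨v, h2, rfl⟩
    · intro w hw
      exact Ff_local Q w (h w.1 w.2 (hpre w hw).1 (hpre w hw).2)
  have hr : (ball a r).Nonempty := ⟨_, hza⟩
  have : ContractibleSpace (ball a r) := (convex_ball a r).contractibleSpace hr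
  have : LocallyPathConnectedSpace (ball a r) := isOpen_ball.locallyPathConnectedSpace
  let f : C(ball a r, ℂ × ℂ) := ⟨fun u => ((u : ℂ), 0), by fun_prop⟩
  obtain ⟨Φ, ⟨hΦ1, hΦ2⟩, -⟩ := hcov.existsUnique_continuousMap_lifts f (a₀ := ⟨z.1, hza⟩) (e₀ := z)
    (by simp [f, Ff, hz]) (fun u => ⟨hb u u.2, rfl⟩)
  have hΦ3 : ∀ u, (Φ u).1 = u ∧ Gf Q (Φ u) = 0 := by
    intro u
    have : (Φ u).1 = (u : ℂ) ∧ Gf Q (Φ u) = 0 := Prod.mk.inj (congrFun hΦ2 u)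
    exact this
  let σ : ℂ → ℂ := fun u => if hu : u ∈ ball a r then (Φ ⟨u, hu⟩).2 else 0
  have hσ : ∀ u (hu : u ∈ ball a r), (u, σ u) = Φ ⟨u, hu⟩ := by
    intro u hu
    simp only [σ, dif_pos hu]
    ext
    · exact (hΦ3 ⟨u, hu⟩).1.symm
    · rfl
  have hσc : ContinuousOn σ (ball a r) := by
    rw [continuousOn_iff_continuous_domRestrict]
    have : (ball a r).domRestrict σ = fun u => (Φ u).2 := by
      funext u
      simp only [Set.domRestrict_apply, σ, dif_pos u.2]
    rw [this]
    fun_prop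
  have hσz : ∀ u ∈ ball a r, Gf Q (u, σ u) = 0 := by
    intro u hu
    rw [hσ u hu]; exact (hΦ3 _).2
  refine ⟨σ, hσc, ?_, hσz, ?_⟩
  · have := hσ z.1 hza
    rw [hΦ1] at this
    exact congrArg Prod.snd this
  · intro S k hS hk hkS ⟨s₀, hs₀, hk₀⟩ s₁ hs₁
    have hcm := hcov.isCoveringMap_restrictPreimage
    have : PreconnectedSpace S := isPreconnected_iff_preconnectedSpace.1 hS
    have m1 : ∀ t : S, k t ∈ Ff Q ⁻¹' s := fun t =>
      ⟨hb _ (hkS t t.2).2, (hkS t t.2).1⟩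
    have m2 : ∀ t : S, ((k t).1, σ (k t).1) ∈ Ff Q ⁻¹' s := fun t =>
      ⟨hb _ (hkS t t.2).2, hσz _ (hkS t t.2).2⟩
    have hkc : Continuous fun t : S => k t := continuousOn_iff_continuous_domRestrict.1 hk
    let g₁ : S → Ff Q ⁻¹' s := fun t => ⟨k t, m1 t⟩
    let g₂ : S → Ff Q ⁻¹' s := fun t => ⟨((k t).1, σ (k t).1), m2 t⟩
    have c1 : Continuous g₁ := hkc.subtype_mk _
    have c2 : Continuous g₂ := by
      refine Continuous.subtype_mk ?_ _
      refine hkc.fst.prodMk ?_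
      exact hσc.comp_continuous hkc.fst (fun t => (hkS t t.2).2)
    have heq := hcm.eq_of_comp_eq c1 c2 (by
      funext t
      apply Subtype.ext
      change Ff Q (k t) = Ff Q ((k t).1, σ (k t).1)
      simp only [Ff]
      rw [hσz _ (hkS t t.2).2, (hkS t t.2).1]) ⟨s₀, hs₀⟩ (by
      apply Subtype.ext
      exact Prod.ext rfl hk₀)
    have := congrArg Subtype.val (congrFun heq ⟨s₁, hs₁⟩)
    exact congrArg Prod.snd this

theorem good_data {X : Set (EuclideanSpace ℂ (Fin 2))} (hX : IsAlgebraicCurve X) :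
    ∃ (c : ℂ) (T : Finset ℂ) (A : ℝ), 1 ≤ A ∧
      (∀ η : ℝ, 0 < η → ∃ R, Good {z : ℂ × ℂ | !₂[z.1 + c * z.2, z.2] ∈ X} T (curveDegree X) η R) ∧
      ∀ z : ℂ × ℂ, !₂[z.1 + c * z.2, z.2] ∈ X → ‖z.2‖ ≤ A * max 1 ‖z.1‖ := by
  classical
  obtain ⟨F, q, hq, hnd, hXV, hdeg⟩ := curve_eq hX
  have hne : (∏ C ∈ F, q C) ≠ 0 := Finset.prod_ne_zero_iff.2 fun C hC => (hq C hC).ne_zero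
  obtain ⟨c, e, hN⟩ := exists_shear hne
  rw [← hdeg] at hN
  set d := curveDegree X
  set Q := shear c (∏ C ∈ F, q C) with hQdef
  have hmem : ∀ z : ℂ × ℂ, !₂[z.1 + c * z.2, z.2] ∈ X ↔ Gf Q z = 0 := by
    intro z
    rw [hXV, Gf, hQdef, eval_shear, VV, Set.mem_ofPred_eq]
  have hZ : {z : ℂ × ℂ | !₂[z.1 + c * z.2, z.2] ∈ X} = {z | Gf Q z = 0} := by
    ext z; exact hmem z
  have hQprod : Q = ∏ C ∈ F, shear c (q C) := by rw [hQdef, map_prod]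
  have hdisc : {x : Fin 2 → ℂ | MvPolynomial.eval x Q = 0 ∧
      MvPolynomial.eval x (MvPolynomial.pderiv 1 Q) = 0}.Finite := by
    rw [hQprod] at hN ⊢
    refine disc_fin F (fun C => shear c (q C)) ?_ ?_ hN
    · intro C hC
      exact (MulEquiv.irreducible_iff (shear c)).2 (hq C hC)
    · intro C hC C' hC' hne hd
      exact hnd C hC C' hC' hne ((map_dvd_iff (shear c)).1 hd)
  obtain ⟨R₀, hR₀⟩ : ∃ R₀ : ℝ, ∀ x ∈ {x : Fin 2 → ℂ | MvPolynomial.eval x Q = 0 ∧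
      MvPolynomial.eval x (MvPolynomial.pderiv 1 Q) = 0}, ‖x‖ ≤ R₀ :=
    hdisc.isBounded.exists_norm_le
  have hsimple : ∀ u v, R₀ < ‖u‖ → MvPolynomial.eval ![u, v] Q = 0 →
      MvPolynomial.eval ![u, v] (MvPolynomial.pderiv 1 Q) ≠ 0 := by
    intro u v hu h1 h2
    have h3 := hR₀ ![u, v] ⟨h1, h2⟩
    have h4 := norm_le_pi_norm ![u, v] 0
    simp only [Matrix.cons_val_zero] at h4
    linarith
  obtain ⟨A, hA, hAb⟩ := bound2 hN
  obtain ⟨T, hT⟩ := slope_bound hN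
  refine ⟨c, T, A, hA, ?_, fun z hz => hAb z.1 z.2 ((hmem z).1 hz)⟩
  intro η hη
  rw [hZ]
  obtain ⟨R₁, hR₁⟩ := hT η hη
  refine ⟨max R₀ R₁, ?_, ?_, ?_, ?_⟩
  · intro u hu
    exact (card_roots hN u (fun v => hsimple u v ((le_max_left _ _).trans_lt hu))).1
  · intro u hu
    exact (card_roots hN u (fun v => hsimple u v ((le_max_left _ _).trans_lt hu))).2
  · intro u v hz hu
    exact hR₁ u v hz ((le_max_right _ _).trans_lt hu)
  · intro a r hb z hz hza
    have hd : 1 ≤ d := by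
      by_contra hd
      have h0 : d = 0 := by omega
      have h1 := (card_roots hN z.1 (fun v => hsimple z.1 v ((le_max_left _ _).trans_lt (hb _ hza))))
      rw [h0, Set.ncard_eq_zero h1.1] at h1
      have : z.2 ∈ {v | MvPolynomial.eval ![z.1, v] Q = 0} := hz
      rw [h1.2] at this
      exact this
    exact lift_data hN hd hsimple a r (fun u hu => (le_max_left _ _).trans_lt (hb u hu)) z hz hza
end

section
def PhiL (c : ℂ) : (ℂ × ℂ) ≃ₗ[ℂ] EuclideanSpace ℂ (Fin 2) where
  toFun z := !₂[z.1 + c * z.2, z.2]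
  invFun x := (x 0 - c * x 1, x 1)
  map_add' z w := by
    ext i; fin_cases i
    · simp; ring
    · simp
  map_smul' a z := by
    ext i; fin_cases i
    · simp; ring
    · simp
  left_inv z := by simp
  right_inv x := by ext i; fin_cases i <;> simp

def Phi (c : ℂ) : (ℂ × ℂ) ≃L[ℂ] EuclideanSpace ℂ (Fin 2) := (PhiL c).toContinuousLinearEquiv

lemma Phi_apply (c : ℂ) (z : ℂ × ℂ) : Phi c z = !₂[z.1 + c * z.2, z.2] := rfl

lemma Phi_bd (c : ℂ) : ∃ α : ℝ, 1 ≤ α ∧ (∀ z, ‖Phi c z‖ ≤ α * ‖z‖) ∧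
    ∀ x, ‖(Phi c).symm x‖ ≤ α * ‖x‖ := by
  refine ⟨1 + ‖(Phi c : (ℂ × ℂ) →L[ℂ] EuclideanSpace ℂ (Fin 2))‖ +
    ‖((Phi c).symm : EuclideanSpace ℂ (Fin 2) →L[ℂ] (ℂ × ℂ))‖, ?_, ?_, ?_⟩
  · have h1 := norm_nonneg (Phi c : (ℂ × ℂ) →L[ℂ] EuclideanSpace ℂ (Fin 2))
    have h2 := norm_nonneg ((Phi c).symm : EuclideanSpace ℂ (Fin 2) →L[ℂ] (ℂ × ℂ))
    linarith
  · intro z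
    refine ((Phi c : (ℂ × ℂ) →L[ℂ] EuclideanSpace ℂ (Fin 2)).le_opNorm z).trans ?_
    have h2 := norm_nonneg ((Phi c).symm : EuclideanSpace ℂ (Fin 2) →L[ℂ] (ℂ × ℂ))
    gcongr
    linarith
  · intro z
    refine (((Phi c).symm : EuclideanSpace ℂ (Fin 2) →L[ℂ] (ℂ × ℂ)).le_opNorm z).trans ?_
    have h1 := norm_nonneg (Phi c : (ℂ × ℂ) →L[ℂ] EuclideanSpace ℂ (Fin 2))
    gcongr
    linarith

lemma transfer {X Y K : Set (EuclideanSpace ℂ (Fin 2))} {c c' : ℂ} {A A' C : ℝ}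
    (hA : 1 ≤ A) (hA' : 1 ≤ A')
    (hX : ∀ z : ℂ × ℂ, !₂[z.1 + c * z.2, z.2] ∈ X → ‖z.2‖ ≤ A * max 1 ‖z.1‖)
    (hY : ∀ z : ℂ × ℂ, !₂[z.1 + c' * z.2, z.2] ∈ Y → ‖z.2‖ ≤ A' * max 1 ‖z.1‖)
    (hK : IsCompact K) (f g : EuclideanSpace ℂ (Fin 2) → EuclideanSpace ℂ (Fin 2))
    (hfm : ∀ x ∈ X \ K, f x ∈ Y) (hgf : ∀ x ∈ X \ K, g (f x) = x) (hC : 1 ≤ C)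
    (h1 : ∀ x ∈ X \ K, ∀ x' ∈ X \ K, ‖f x - f x'‖ ≤ C * ‖x - x'‖)
    (h2 : ∀ x ∈ X \ K, ∀ x' ∈ X \ K, ‖x - x'‖ ≤ C * ‖f x - f x'‖) :
    ∃ M R, 2 ≤ M ∧ BL {z : ℂ × ℂ | !₂[z.1 + c * z.2, z.2] ∈ X}
      {z : ℂ × ℂ | !₂[z.1 + c' * z.2, z.2] ∈ Y}
      (fun z => (Phi c').symm (f (Phi c z))) (fun z => (Phi c).symm (g (Phi c' z))) M R := by
  obtain ⟨α, hα, hα1, hα2⟩ := Phi_bd c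
  obtain ⟨β, hβ, hβ1, hβ2⟩ := Phi_bd c'
  obtain ⟨B, hB⟩ := hK.isBounded.exists_norm_le
  set R₀ := max 1 (α * B) with hR₀
  have hout : ∀ z : ℂ × ℂ, !₂[z.1 + c * z.2, z.2] ∈ X → R₀ < ‖z.1‖ → Phi c z ∈ X \ K := by
    intro z hz hR
    refine ⟨hz, fun hk => ?_⟩
    have h3 := hB _ hk
    have h4 := hα2 (Phi c z)
    rw [ContinuousLinearEquiv.symm_apply_apply] at h4
    have h5 := norm_fst_le z
    have h6 : α * B < ‖z.1‖ := (le_max_right _ _).trans_lt hR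
    have h7 : α * ‖Phi c z‖ ≤ α * B := by gcongr
    linarith
  by_cases hex : ∃ z₀ : ℂ × ℂ, !₂[z₀.1 + c * z₀.2, z₀.2] ∈ X ∧ R₀ < ‖z₀.1‖
  swap
  · push Not at hex
    refine ⟨2, R₀, le_rfl, ?_, ?_, ?_, ?_, ?_⟩
    · intro x hx hR; exact absurd hR (not_lt.2 (hex x hx))
    · intro x hx hR; exact absurd hR (not_lt.2 (hex x hx))
    · intro x hx hR; exact absurd hR (not_lt.2 (hex x hx))
    · intro x hx hR; exact absurd hR (not_lt.2 (hex x hx))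
    · intro x hx x' _ hR; exact absurd hR (not_lt.2 (hex x hx))
  obtain ⟨z₀, hz₀, hz₀R⟩ := hex
  have hx₀ := hout z₀ hz₀ hz₀R
  set x₀ := Phi c z₀
  set N := ‖f x₀‖ + ‖x₀‖ with hN
  have hN0 : 0 ≤ N := by positivity
  have e1 : ∀ x ∈ X \ K, ‖f x‖ ≤ C * (‖x‖ + N) := by
    intro x hx
    have a1 := h1 x hx x₀ hx₀
    have a2 := norm_sub_le x x₀
    have a3 := norm_sub_norm_le (f x) (f x₀)
    have a4 : C * ‖x - x₀‖ ≤ C * (‖x‖ + ‖x₀‖) := by gcongr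
    have a5 : ‖f x₀‖ ≤ C * ‖f x₀‖ := le_mul_of_one_le_left (norm_nonneg _) hC
    rw [hN]; linarith
  have e2 : ∀ x ∈ X \ K, ‖x‖ ≤ C * (‖f x‖ + N) := by
    intro x hx
    have a1 := h2 x hx x₀ hx₀
    have a2 := norm_sub_le (f x) (f x₀)
    have a3 := norm_sub_norm_le x x₀
    have a4 : C * ‖f x - f x₀‖ ≤ C * (‖f x‖ + ‖f x₀‖) := by gcongr
    have a5 : ‖x₀‖ ≤ C * ‖x₀‖ := le_mul_of_one_le_left (norm_nonneg _) hC
    rw [hN]; linarith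
  set D := α * (C * (β * A' + N)) with hD
  have hD0 : 0 ≤ D := by positivity
  set U := β * (C * (α * A + N)) with hU
  have hU0 : 0 ≤ U := by positivity
  set W := β * (C * α) with hW
  have hW0 : 0 ≤ W := by positivity
  have hmem : ∀ z : ℂ × ℂ, !₂[z.1 + c * z.2, z.2] ∈ X → R₀ < ‖z.1‖ →
      !₂[((Phi c').symm (f (Phi c z))).1 + c' * ((Phi c').symm (f (Phi c z))).2,
        ((Phi c').symm (f (Phi c z))).2] ∈ Y := by
    intro z hz hR
    rw [← Phi_apply, ContinuousLinearEquiv.apply_symm_apply]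
    exact hfm _ (hout z hz hR)
  refine ⟨2 * D + U + W + 2, max R₀ (2 * D), by linarith, ?_, ?_, ?_, ?_, ?_⟩
  · intro z hz hR
    exact hmem z hz ((le_max_left _ _).trans_lt hR)
  · intro z hz hR
    have := hgf _ (hout z hz ((le_max_left _ _).trans_lt hR))
    simp only [ContinuousLinearEquiv.apply_symm_apply, this, ContinuousLinearEquiv.symm_apply_apply]
  · intro z hz hR
    have hR0 : R₀ < ‖z.1‖ := (le_max_left _ _).trans_lt hR
    have hR2 : 2 * D < ‖z.1‖ := (le_max_right _ _).trans_lt hR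
    have b1 := e2 _ (hout z hz hR0)
    have b2 := hα2 (Phi c z)
    rw [ContinuousLinearEquiv.symm_apply_apply] at b2
    have b3 := norm_fst_le z
    set w := (Phi c').symm (f (Phi c z)) with hw
    have b4 : ‖f (Phi c z)‖ ≤ β * ‖w‖ := by
      have := hβ1 w
      rwa [hw, ContinuousLinearEquiv.apply_symm_apply] at this
    have b5 := hY w (hmem z hz hR0)
    have b6 : max 1 ‖w.1‖ ≤ 1 + ‖w.1‖ := max_le (by linarith [norm_nonneg w.1]) (by linarith)
    have b7 : ‖w‖ ≤ A' * (1 + ‖w.1‖) := by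
      rw [Prod.norm_def]
      refine max_le ?_ (b5.trans (by gcongr))
      have := norm_nonneg w.1
      nlinarith
    have b8 : ‖z.1‖ ≤ D * (1 + ‖w.1‖) := by
      have hNN : N ≤ N * (1 + ‖w.1‖) := le_mul_of_one_le_right hN0 (by linarith [norm_nonneg w.1])
      calc ‖z.1‖ ≤ α * ‖Phi c z‖ := b3.trans b2
        _ ≤ α * (C * (‖f (Phi c z)‖ + N)) := by gcongr
        _ ≤ α * (C * (β * (A' * (1 + ‖w.1‖)) + N * (1 + ‖w.1‖))) := by
            gcongr
            exact b4.trans (by gcongr)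
        _ = D * (1 + ‖w.1‖) := by rw [hD]; ring
    change ‖z.1‖ ≤ (2 * D + U + W + 2) * ‖w.1‖
    have : 0 ≤ (U + W + 2) * ‖w.1‖ := by positivity
    nlinarith
  · intro z hz hR
    have hR0 : R₀ < ‖z.1‖ := (le_max_left _ _).trans_lt hR
    have hz1 : 1 ≤ ‖z.1‖ := ((le_max_left _ _).trans_lt hR0).le
    have b1 := e1 _ (hout z hz hR0)
    have b2 := hX z hz
    rw [max_eq_right hz1] at b2
    have b3 : ‖z‖ ≤ A * ‖z.1‖ := by
      rw [Prod.norm_def]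
      exact max_le (le_mul_of_one_le_left (norm_nonneg _) hA) b2
    have hNN : N ≤ N * ‖z.1‖ := le_mul_of_one_le_right hN0 hz1
    change ‖((Phi c').symm (f (Phi c z))).1‖ ≤ (2 * D + U + W + 2) * ‖z.1‖
    calc ‖((Phi c').symm (f (Phi c z))).1‖ ≤ ‖(Phi c').symm (f (Phi c z))‖ := norm_fst_le _
      _ ≤ β * ‖f (Phi c z)‖ := hβ2 _
      _ ≤ β * (C * (‖Phi c z‖ + N)) := by gcongr
      _ ≤ β * (C * (α * (A * ‖z.1‖) + N * ‖z.1‖)) := by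
          gcongr
          exact (hα1 z).trans (by gcongr)
      _ = U * ‖z.1‖ := by rw [hU]; ring
      _ ≤ (2 * D + U + W + 2) * ‖z.1‖ := by gcongr; linarith
  · intro z hz z' hz' hR hR'
    have hR0 : R₀ < ‖z.1‖ := (le_max_left _ _).trans_lt hR
    have hR0' : R₀ < ‖z'.1‖ := (le_max_left _ _).trans_lt hR'
    have b1 := h1 _ (hout z hz hR0) _ (hout z' hz' hR0')
    change ‖(Phi c').symm (f (Phi c z)) - (Phi c').symm (f (Phi c z'))‖ ≤ _
    rw [← map_sub]
    calc ‖(Phi c').symm (f (Phi c z) - f (Phi c z'))‖ ≤ β * ‖f (Phi c z) - f (Phi c z')‖ := hβ2 _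
      _ ≤ β * (C * ‖Phi c z - Phi c z'‖) := by gcongr
      _ ≤ β * (C * (α * ‖z - z'‖)) := by
          gcongr
          rw [← map_sub]; exact hα1 _
      _ = W * ‖z - z'‖ := by rw [hW]; ring
      _ ≤ _ := by gcongr; linarith

lemma BL.monoM {Z Z' : Set (ℂ × ℂ)} {f g : ℂ × ℂ → ℂ × ℂ} {M M' R R' : ℝ} (h : BL Z Z' f g M R)
    (hM : M ≤ M') (hR : R ≤ R') : BL Z Z' f g M' R' := by
  refine ⟨fun x hx hu => h.mem x hx (by linarith), fun x hx hu => h.inv x hx (by linarith),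
    fun x hx hu => (h.lo x hx (by linarith)).trans (by gcongr),
    fun x hx hu => (h.up x hx (by linarith)).trans (by gcongr),
    fun x hx x' hx' h1 h2 => (h.lip x hx x' hx' (by linarith) (by linarith)).trans (by gcongr)⟩

theorem final (X Y : Set (EuclideanSpace ℂ (Fin 2)))
    (hX : IsAlgebraicCurve X) (hY : IsAlgebraicCurve Y)
    (h : BiLipschitzEquivAtInfinity X Y) :
    curveDegree X = curveDegree Y := by
  obtain ⟨K₁, K₂, hK₁, hK₂, f, hbij, C, hC, hf⟩ := h
  obtain ⟨c, T, A, hA, hG, hXb⟩ := good_data hX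
  obtain ⟨c', T', A', hA', hG', hYb⟩ := good_data hY
  have hCp : 0 < C := by linarith
  set g := Function.invFunOn f (X \ K₁) with hg
  have hgm : ∀ y ∈ Y \ K₂, g y ∈ X \ K₁ := fun y hy =>
    Function.invFunOn_mem (hbij.surjOn hy)
  have hfg : ∀ y ∈ Y \ K₂, f (g y) = y := fun y hy =>
    Function.invFunOn_eq (hbij.surjOn hy)
  have hgf : ∀ x ∈ X \ K₁, g (f x) = x := fun x hx =>
    hbij.injOn (hgm _ (hbij.mapsTo hx)) hx (hfg _ (hbij.mapsTo hx))
  have hlo : ∀ x ∈ X \ K₁, ∀ x' ∈ X \ K₁, ‖x - x'‖ ≤ C * ‖f x - f x'‖ := by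
    intro x hx x' hx'
    have := (hf x hx x' hx').1
    rwa [inv_mul_le_iff₀ hCp] at this
  obtain ⟨M₁, R₁, hM₁, b₁⟩ := transfer (K := K₁) hA hA' hXb hYb hK₁ f g
    (fun x hx => (hbij.mapsTo hx).1) hgf hC (fun x hx x' hx' => (hf x hx x' hx').2) hlo
  obtain ⟨M₂, R₂, hM₂, b₂⟩ := transfer (K := K₂) hA' hA hYb hXb hK₂ g f
    (fun x hx => (hgm x hx).1) hfg hC
    (fun y hy y' hy' => by
      have := hlo _ (hgm y hy) _ (hgm y' hy')
      rwa [hfg y hy, hfg y' hy'] at this)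
    (fun y hy y' hy' => by
      have := (hf _ (hgm y hy) _ (hgm y' hy')).2
      rwa [hfg y hy, hfg y' hy'] at this)
  have b₁' := b₁.monoM (le_max_left M₁ M₂) (le_max_left R₁ R₂)
  have b₂' := b₂.monoM (le_max_right M₁ M₂) (le_max_right R₁ R₂)
  have hM : 2 ≤ max M₁ M₂ := hM₁.trans (le_max_left _ _)
  exact le_antisymm (deg_le hG hG' b₁' b₂' hM) (deg_le hG' hG b₂' b₁' hM)
end

/-- algebraic plane curves which are bi-Lipschitz equivalent at infinity have
the same degree. -/
theorem stmt_9 (X Y : Set (EuclideanSpace ℂ (Fin 2)))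
    (hX : IsAlgebraicCurve X) (hY : IsAlgebraicCurve Y)
    (h : BiLipschitzEquivAtInfinity X Y) :
    curveDegree X = curveDegree Y := by
  exact final X Y hX hY h

end
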